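/- arXiv:1504.04250 — 5 statements merged into one kernel-verified Lean document; each statement's English description precedes it below -/
import Mathlib

section
/- Let p ∈ (1,∞) and let T = (V,E,w) be a weighted tree whose combinatorial diameter cdiam(T) (the diameter of T in the metric obtained by giving every edge weight 1) is finite and at least 1. Then c_{ℓ^p(E)}(T) ≤ 96·(6·ln(2·cdiam(T)))^{1/p}. -/
open Set Function Filter

open scoped ENNReal

attribute [local instance] Classical.propDecidable

noncomputable section

def LipUB {α β : Type*} (dα : α → α → ℝ) (dβ : β → β → ℝ) (f : α → β) (L : ℝ) : Prop :=
  ∀ a b : α, dβ (f a) (f b) ≤ L * dα a b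

def CoLipUB {α β : Type*} (dα : α → α → ℝ) (dβ : β → β → ℝ) (f : α → β) (C : ℝ) : Prop :=
  ∀ a b : α, dα a b ≤ C * dβ (f a) (f b)

def IsBiLipEmb {α β : Type*} (dα : α → α → ℝ) (dβ : β → β → ℝ) (f : α → β) : Prop :=
  Function.Injective f ∧ ∃ L C : ℝ, LipUB dα dβ f L ∧ CoLipUB dα dβ f C

def distortionSet (α β : Type*) (dα : α → α → ℝ) (dβ : β → β → ℝ) : Set ℝ :=
  {D | ∃ f : α → β, Function.Injective f ∧ ∃ L C : ℝ,
    LipUB dα dβ f L ∧ CoLipUB dα dβ f C ∧ D = L * C}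

def cDist (α β : Type*) (dα : α → α → ℝ) (dβ : β → β → ℝ) : ℝ≥0∞ :=
  ⨅ D ∈ distortionSet α β dα dβ, ENNReal.ofReal D
structure RootedWTree (V : Type*) where
  root : V
  parent : V → V
  w : V → ℝ
  parent_root : parent root = root
  reach : ∀ v : V, ∃ n : ℕ, parent^[n] v = root
  w_pos : ∀ v : V, v ≠ root → 0 < w v

namespace RootedWTree

variable {V : Type*} (T : RootedWTree V)

def up (v : V) (n : ℕ) : V := T.parent^[n] v

def Anc (u v : V) : Prop := ∃ n : ℕ, T.up v n = u

lemma exists_anc (x y : V) : ∃ n : ℕ, T.Anc (T.up x n) y := by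
  obtain ⟨n, hn⟩ := T.reach x
  obtain ⟨m, hm⟩ := T.reach y
  exact ⟨n, m, by simp only [up]; rw [hm, hn]⟩

def climb (x y : V) : ℕ := Nat.find (T.exists_anc x y)

def rho (x y : V) : ℝ :=
  (∑ k ∈ Finset.range (T.climb x y), T.w (T.up x k)) +
  (∑ k ∈ Finset.range (T.climb y x), T.w (T.up y k))

def pathEdges (x y : V) : List V :=
  ((List.range (T.climb x y)).map (fun k => T.up x k)) ++
  ((List.range (T.climb y x)).map (fun k => T.up y k))

def MonotoneClass {C : Type*} (χ : V → C) (c : C) : Prop :=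
  (∀ u v : V, u ≠ T.root → v ≠ T.root → χ u = c → χ v = c → T.Anc u v ∨ T.Anc v u) ∧
  (∀ (v : V) (n : ℕ), v ≠ T.root → χ v = c → T.up v n ≠ T.root → χ (T.up v n) = c →
    ∀ k ≤ n, χ (T.up v k) = c)

def IsMonotoneColoring {C : Type*} (χ : V → C) : Prop := ∀ c : C, T.MonotoneClass χ c

def IsBranch (P : Set V) : Prop := IsMaxChain (fun u v => T.Anc u v) P

def IsCaterpillar {C : Type*} (χ : V → C) (κ : ℕ) : Prop :=
  T.IsMonotoneColoring χ ∧
  ∀ P : Set V, T.IsBranch P → ∃ s : Finset C, s.card ≤ κ ∧ ∀ v ∈ P, v ≠ T.root → χ v ∈ s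

def colorLen {C : Type*} (χ : V → C) (c : C) (x y : V) : ℝ :=
  (((T.pathEdges x y).filter (fun e => decide (χ e = c))).map T.w).sum

def IsStrong {C : Type*} (χ : V → C) (δ : ℝ) : Prop :=
  T.IsMonotoneColoring χ ∧
  ∀ x y : V, x ≠ y →
    T.rho x y / 2 ≤
      (((T.pathEdges x y).filter
        (fun e => decide (δ * T.rho x y ≤ T.colorLen χ (χ e) x y))).map T.w).sum

end RootedWTree

/-! Let `e₀, e₁, …` be the edges on the path from `x` to the root, starting at `x`, with weights
`aₖ`. An embedding with coordinates `aₖ^(1/p) * (a₀ + ⋯ + aₖ)^(1 - 1/p)` has the right lower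
bound, because `∑ aₖ (a₀ + ⋯ + aₖ)^(p - 1)` is comparable to `(∑ aₖ)^p`. When `x` moves to its
parent, the image moves by about `a₀ (∑ aₖ / (a₀ + ⋯ + aₖ))^(1/p)`, and this sum is only
logarithmic in the number of terms as long as the weights `aₖ` are at most `2Δ * a₀`. Lowering
each of the weights `a₀, …, aₖ` in the coordinate of `eₖ` by `aₖ / (2Δ)`, but not below `0`, makes
this coordinate insensitive to `e₀` when `aₖ ≥ 2Δ * a₀`, and costs at most half of the total
length, since the path has at most `Δ` edges. -/

section RealInequalities

lemma rpow_sub_rpow_le_mul_rpow {s t p : ℝ} (hp : 1 ≤ p) (ht : 0 ≤ t) (hts : t ≤ s) :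
    s ^ p - t ^ p ≤ p * ((s - t) * s ^ (p - 1)) := by
  obtain rfl | hs := (ht.trans hts).eq_or_lt
  · obtain rfl : t = 0 := le_antisymm hts ht
    simp
  have bernoulli : 1 + p * (t / s - 1) ≤ (t / s) ^ p := by
    have h := one_add_mul_self_le_rpow_one_add (s := t / s - 1)
      (by linarith [div_nonneg ht hs.le]) hp
    rwa [add_sub_cancel] at h
  rw [Real.div_rpow ht hs.le, le_div_iff₀ (Real.rpow_pos_of_pos hs p)] at bernoulli
  have hsp : s ^ p = s ^ (p - 1) * s := by
    rw [← Real.rpow_add_one hs.ne', sub_add_cancel]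
  have expand : (1 + p * (t / s - 1)) * s ^ p = s ^ p - p * ((s - t) * s ^ (p - 1)) := by
    rw [hsp]
    field_simp
    ring
  linarith

lemma rpow_sub_rpow_le_mul_rpow_of_le_one {s t q : ℝ} (hq : q ≤ 1) (ht : 0 ≤ t) (hts : t ≤ s)
    (hs : 0 < s) : s ^ q - t ^ q ≤ (s - t) * s ^ (q - 1) := by
  have hs_rpow : s ^ q = s * s ^ (q - 1) := by
    rw [mul_comm, ← Real.rpow_add_one hs.ne', sub_add_cancel]
  have ht_rpow : t * s ^ (q - 1) ≤ t ^ q := by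
    obtain rfl | ht := ht.eq_or_lt
    · simpa using Real.rpow_nonneg le_rfl q
    · calc t * s ^ (q - 1) ≤ t * t ^ (q - 1) :=
            mul_le_mul_of_nonneg_left (Real.rpow_le_rpow_of_nonpos ht hts (by linarith)) ht.le
        _ = t ^ q := by rw [mul_comm, ← Real.rpow_add_one ht.ne', sub_add_cancel]
  linarith

lemma rpow_one_div_mul_rpow_rpow {a s p : ℝ} (hp : p ≠ 0) (ha : 0 ≤ a) (hs : 0 ≤ s) :
    (a ^ (1 / p) * s ^ (1 - 1 / p)) ^ p = a * s ^ (p - 1) := by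
  rw [Real.mul_rpow (by positivity) (by positivity), ← Real.rpow_mul ha, ← Real.rpow_mul hs,
    one_div_mul_cancel hp, Real.rpow_one, sub_mul, one_mul, one_div_mul_cancel hp]

lemma abs_rpow_mul_sub_rpow_le {a s t p : ℝ} (hp : 1 ≤ p) (ha : 0 ≤ a) (ht : 0 ≤ t) (hts : t ≤ s)
    (hs : 0 < s) :
    |a ^ (1 / p) * s ^ (1 - 1 / p) - a ^ (1 / p) * t ^ (1 - 1 / p)| ^ p ≤
      (s - t) ^ p * (a / s) := by
  have hp0 : 0 < p := by linarith
  have hq : 0 ≤ 1 - 1 / p := sub_nonneg.2 ((div_le_one hp0).2 hp)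
  have hmono : t ^ (1 - 1 / p) ≤ s ^ (1 - 1 / p) := Real.rpow_le_rpow ht hts hq
  have hdiff : s ^ (1 - 1 / p) - t ^ (1 - 1 / p) ≤ (s - t) * s ^ (-(1 / p)) := by
    simpa only [sub_sub_cancel_left] using
      rpow_sub_rpow_le_mul_rpow_of_le_one (sub_le_self 1 (by positivity)) ht hts hs
  have hst : 0 ≤ s - t := sub_nonneg.2 hts
  rw [← mul_sub, abs_of_nonneg (mul_nonneg (by positivity) (sub_nonneg.2 hmono))]
  calc (a ^ (1 / p) * (s ^ (1 - 1 / p) - t ^ (1 - 1 / p))) ^ p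
      ≤ (a ^ (1 / p) * ((s - t) * s ^ (-(1 / p)))) ^ p := by
        have := sub_nonneg.2 hmono
        gcongr
    _ = (s - t) ^ p * (a / s) := by
        rw [Real.mul_rpow (by positivity) (by positivity), Real.mul_rpow hst (by positivity),
          ← Real.rpow_mul ha, ← Real.rpow_mul hs.le, neg_mul, one_div_mul_cancel hp0.ne',
          Real.rpow_one, Real.rpow_neg_one]
        ring

lemma mul_two_rpow_sub_one_le_four_rpow {p : ℝ} (hp : 1 ≤ p) : p * 2 ^ (p - 1) ≤ (4 : ℝ) ^ p := by
  have bernoulli : 1 + p * 1 ≤ (1 + 1 : ℝ) ^ p :=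
    one_add_mul_self_le_rpow_one_add (by norm_num) hp
  calc p * 2 ^ (p - 1) ≤ (2 : ℝ) ^ p * 2 ^ p := by
        gcongr
        · norm_num at bernoulli
          linarith
        · norm_num
        · linarith
    _ = 4 ^ p := by rw [← Real.mul_rpow (by norm_num) (by norm_num)]; norm_num

lemma sub_div_le_log_sub_log {s t : ℝ} (hs : 0 < s) (ht : 0 < t) :
    (t - s) / t ≤ Real.log t - Real.log s := by
  have h := Real.one_sub_inv_le_log_of_pos (div_pos ht hs)
  rwa [inv_div, Real.log_div ht.ne' hs.ne', one_sub_div ht.ne'] at h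

lemma one_add_log_mul_le_three_mul_log {M m : ℝ} (hM : 2 ≤ M) (hm : 0 < m) (hmM : 2 * m ≤ M) :
    1 + Real.log (M * m) ≤ 3 * Real.log M := by
  have hlog_two : Real.log 2 ≤ Real.log M := Real.log_le_log (by norm_num) hM
  have hlog_m : Real.log 2 + Real.log m ≤ Real.log M := by
    rw [← Real.log_mul (by norm_num) hm.ne']
    exact Real.log_le_log (by positivity) hmM
  rw [Real.log_mul (by linarith) hm.ne']
  linarith [Real.log_two_gt_d9]

end RealInequalities

section PartialSums

lemma sum_div_two_le_sum_posPart_sub {ι : Type*} {s : Finset ι} {f : ι → ℝ} {c : ℝ}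
    (hc : 2 * (s.card * c) ≤ ∑ i ∈ s, f i) : (∑ i ∈ s, f i) / 2 ≤ ∑ i ∈ s, (f i - c)⁺ :=
  calc (∑ i ∈ s, f i) / 2 ≤ ∑ i ∈ s, f i - s.card * c := by linarith
    _ = ∑ i ∈ s, (f i - c) := by rw [Finset.sum_sub_distrib, Finset.sum_const, nsmul_eq_mul]
    _ ≤ ∑ i ∈ s, (f i - c)⁺ := Finset.sum_le_sum fun _ _ => le_posPart _

variable {a : ℕ → ℝ} {n : ℕ}

lemma rpow_sum_range_le {p : ℝ} (hp : 1 ≤ p) (ha : ∀ k < n, 0 ≤ a k) :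
    (∑ k ∈ Finset.range n, a k) ^ p ≤
      p * ∑ k ∈ Finset.range n, a k * (∑ j ∈ Finset.range (k + 1), a j) ^ (p - 1) := by
  induction n with
  | zero => simp [Real.zero_rpow (by linarith : p ≠ 0)]
  | succ n ih =>
    have hsum : 0 ≤ ∑ k ∈ Finset.range n, a k :=
      Finset.sum_nonneg fun k hk => ha k ((Finset.mem_range.1 hk).trans n.lt_succ_self)
    have hstep := rpow_sub_rpow_le_mul_rpow hp hsum
      (le_add_of_nonneg_right (ha n n.lt_succ_self))
    rw [add_sub_cancel_left, ← Finset.sum_range_succ] at hstep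
    rw [Finset.sum_range_succ (fun k => a k * _), mul_add]
    linarith [ih fun k hk => ha k (hk.trans n.lt_succ_self)]

lemma sum_range_succ_pos (ha0 : 0 < a 0) (ha : ∀ k ≤ n, 0 ≤ a k) :
    0 < ∑ j ∈ Finset.range (n + 1), a j :=
  Finset.sum_pos' (fun k hk => ha k (Finset.mem_range_succ_iff.1 hk)) ⟨0, by simp, ha0⟩

lemma sum_div_partialSum_le (ha0 : 0 < a 0) (ha : ∀ k ≤ n, 0 ≤ a k) :
    ∑ k ∈ Finset.range (n + 1), a k / ∑ j ∈ Finset.range (k + 1), a j ≤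
      1 + Real.log ((∑ j ∈ Finset.range (n + 1), a j) / a 0) := by
  induction n with
  | zero => simp [ha0.ne']
  | succ n ih =>
    have ha' : ∀ k ≤ n, 0 ≤ a k := fun k hk => ha k (hk.trans n.le_succ)
    have hpos := sum_range_succ_pos ha0 ha'
    have hpos' := sum_range_succ_pos ha0 ha
    have hstep := sub_div_le_log_sub_log hpos hpos'
    rw [Finset.sum_range_succ_sub_sum] at hstep
    have hih := ih ha'
    rw [Real.log_div hpos.ne' ha0.ne'] at hih
    rw [Finset.sum_range_succ (fun k => a k / _), Real.log_div hpos'.ne' ha0.ne']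
    linarith

lemma sum_div_partialSum_le_of_le_mul {M : ℝ} (ha0 : 0 < a 0) (ha : ∀ k ≤ n, 0 ≤ a k)
    (haM : ∀ k ≤ n, a k ≤ M * a 0) :
    ∑ k ∈ Finset.range (n + 1), a k / ∑ j ∈ Finset.range (k + 1), a j ≤
      1 + Real.log (M * (n + 1 : ℕ)) := by
  have hsum : ∑ j ∈ Finset.range (n + 1), a j ≤ M * (n + 1 : ℕ) * a 0 := by
    have h := Finset.sum_le_card_nsmul (Finset.range (n + 1)) a _ fun k hk =>
      haM k (Finset.mem_range_succ_iff.1 hk)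
    rw [Finset.card_range, nsmul_eq_mul] at h
    linarith
  have hpos := sum_range_succ_pos ha0 ha
  refine (sum_div_partialSum_le ha0 ha).trans ?_
  gcongr
  exact (div_le_iff₀ ha0).2 hsum

lemma sum_filter_div_partialSum_le {M : ℝ} (hM : 1 ≤ M) (ha0 : 0 < a 0)
    (ha : ∀ k ≤ n, 0 ≤ a k) :
    ∑ k ∈ Finset.range (n + 1) with a k ≤ M * a 0, a k / ∑ j ∈ Finset.range (k + 1), a j ≤
      1 + Real.log (M * (n + 1 : ℕ)) := by
  set b : ℕ → ℝ := fun k => if a k ≤ M * a 0 then a k else 0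
  have hb_zero : b 0 = a 0 := if_pos (le_mul_of_one_le_left ha0.le hM)
  have hb0 : 0 < b 0 := hb_zero ▸ ha0
  have hb {k : ℕ} (hk : k ≤ n) : 0 ≤ b k ∧ b k ≤ a k ∧ b k ≤ M * a 0 := by
    simp only [b]
    split_ifs with h
    · exact ⟨ha k hk, le_rfl, h⟩
    · exact ⟨le_rfl, ha k hk, by positivity⟩
  refine le_trans ?_ (sum_div_partialSum_le_of_le_mul hb0 (fun k hk => (hb hk).1)
    fun k hk => hb_zero ▸ (hb hk).2.2)
  rw [Finset.sum_filter]
  refine Finset.sum_le_sum fun k hk => ?_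
  have hkn := Finset.mem_range_succ_iff.1 hk
  have hpos := sum_range_succ_pos hb0 fun j hj => (hb (hj.trans hkn)).1
  split_ifs with h
  · have hsum : ∑ j ∈ Finset.range (k + 1), b j ≤ ∑ j ∈ Finset.range (k + 1), a j :=
      Finset.sum_le_sum fun j hj => (hb ((Finset.mem_range_succ_iff.1 hj).trans hkn)).2.1
    rw [show b k = a k from if_pos h]
    exact div_le_div_of_nonneg_left (ha k hkn) hpos hsum
  · exact div_nonneg (hb hkn).1 hpos.le

end PartialSums

lemma cDist_le_of_lipUB_of_coLipUB {α β : Type*} {dα : α → α → ℝ} {dβ : β → β → ℝ} {f : α → β}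
    {L C : ℝ} (hα : ∀ a b, dα a b ≤ 0 → a = b) (hβ : ∀ b, dβ b b = 0) (hL : LipUB dα dβ f L)
    (hC : CoLipUB dα dβ f C) : cDist α β dα dβ ≤ ENNReal.ofReal (L * C) := by
  have hinj : Function.Injective f := fun a b hab => hα a b <| by
    simpa [hab, hβ] using hC a b
  exact iInf₂_le _ ⟨f, hinj, L, C, hL, hC, rfl⟩

namespace RootedWTree

variable {V : Type*} {T : RootedWTree V}

section Ancestors

variable {u v x y z : V} {j k n : ℕ}

lemma up_add (x : V) (m n : ℕ) : T.up x (m + n) = T.up (T.up x m) n := by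
  rw [up, add_comm, Function.iterate_add_apply, up, up]

lemma up_root (n : ℕ) : T.up T.root n = T.root := Function.iterate_fixed T.parent_root n

lemma up_succ (x : V) (n : ℕ) : T.up x (n + 1) = T.parent (T.up x n) :=
  Function.iterate_succ_apply' _ _ _

/-- The combinatorial distance from `x` to the root. -/
def depth (T : RootedWTree V) (x : V) : ℕ := Nat.find (T.reach x)

lemma up_eq_root_iff : T.up x n = T.root ↔ T.depth x ≤ n := by
  refine ⟨Nat.find_min' (T.reach x), fun h => ?_⟩
  have hdepth : T.up x (T.depth x) = T.root := Nat.find_spec (T.reach x)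
  rw [← Nat.add_sub_cancel' h, up_add, hdepth, up_root]

lemma up_ne_root_iff : T.up x n ≠ T.root ↔ n < T.depth x := by
  rw [Ne, up_eq_root_iff, not_le]

lemma depth_pos_iff : 0 < T.depth x ↔ x ≠ T.root := up_ne_root_iff.symm

lemma depth_up (x : V) (k : ℕ) : T.depth (T.up x k) = T.depth x - k :=
  eq_of_forall_ge_iff fun n => by
    rw [← up_eq_root_iff, ← up_add, up_eq_root_iff, tsub_le_iff_left]

lemma depth_parent_add_one (hx : x ≠ T.root) : T.depth (T.parent x) + 1 = T.depth x := by
  have hpos := depth_pos_iff.2 hx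
  have hparent : T.depth (T.parent x) = T.depth x - 1 := depth_up x 1
  omega

lemma up_injOn (x : V) : Set.InjOn (T.up x) (Set.Iio (T.depth x)) := by
  intro j hj k hk hjk
  have hdepth := congrArg T.depth hjk
  rw [Set.mem_Iio] at hj hk
  rw [depth_up, depth_up] at hdepth
  omega

lemma anc_up (x : V) (n : ℕ) : T.Anc (T.up x n) x := ⟨n, rfl⟩

lemma anc_parent (x : V) : T.Anc (T.parent x) x := anc_up x 1

lemma anc_root (x : V) : T.Anc T.root x := ⟨T.depth x, up_eq_root_iff.2 le_rfl⟩

lemma Anc.trans (huv : T.Anc u v) (hvz : T.Anc v z) : T.Anc u z := by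
  obtain ⟨n, rfl⟩ := huv
  obtain ⟨m, rfl⟩ := hvz
  exact ⟨m + n, up_add _ _ _⟩

lemma Anc.depth_le (h : T.Anc u v) : T.depth u ≤ T.depth v := by
  obtain ⟨n, rfl⟩ := h
  rw [depth_up]
  exact Nat.sub_le _ _

lemma Anc.antisymm (huv : T.Anc u v) (hvu : T.Anc v u) : u = v := by
  have hle := hvu.depth_le
  obtain ⟨n, rfl⟩ := huv
  rw [depth_up] at hle
  obtain rfl | hv : n = 0 ∨ T.depth v ≤ 0 := by omega
  · rfl
  · obtain rfl : v = T.root := up_eq_root_iff.2 hv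
    exact up_root n

lemma anc_up_up_iff (hk : k < T.depth x) : T.Anc (T.up x k) (T.up x j) ↔ j ≤ k := by
  refine ⟨fun h => ?_, fun h => ⟨k - j, by rw [← up_add, Nat.add_sub_cancel' h]⟩⟩
  have hle := h.depth_le
  rw [depth_up, depth_up] at hle
  omega

lemma anc_up_climb (x y : V) : T.Anc (T.up x (T.climb x y)) y := Nat.find_spec (T.exists_anc x y)

lemma not_anc_up_of_lt_climb (h : k < T.climb x y) : ¬ T.Anc (T.up x k) y :=
  Nat.find_min (T.exists_anc x y) h

lemma climb_le (h : T.Anc (T.up x k) y) : T.climb x y ≤ k := Nat.find_min' (T.exists_anc x y) h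

lemma climb_le_depth (x y : V) : T.climb x y ≤ T.depth x :=
  climb_le <| up_eq_root_iff.2 le_rfl ▸ anc_root y

lemma climb_root (x : V) : T.climb x T.root = T.depth x :=
  (climb_le_depth x T.root).antisymm <|
    up_eq_root_iff.1 ((anc_up_climb x T.root).antisymm (anc_root _))

lemma anc_up_climb_up_climb (x y : V) :
    T.Anc (T.up x (T.climb x y)) (T.up y (T.climb y x)) := by
  obtain ⟨n, hn⟩ := anc_up_climb x y
  have hle : T.climb y x ≤ n := climb_le (hn ▸ anc_up x _)
  exact ⟨n - T.climb y x, by rw [← up_add, Nat.add_sub_cancel' hle, hn]⟩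

lemma up_climb_comm (x y : V) : T.up x (T.climb x y) = T.up y (T.climb y x) :=
  (anc_up_climb_up_climb x y).antisymm (anc_up_climb_up_climb y x)

end Ancestors

section PathLength

variable {x y : V} {k n : ℕ}

/-- The length of the path from `x` to its `n`-th ancestor, so that
`T.rho x y = T.ascent x (T.climb x y) + T.ascent y (T.climb y x)` definitionally. The value is
meaningful for `n ≤ T.depth x` only: `T.w T.root` is not the weight of an edge. -/
def ascent (T : RootedWTree V) (x : V) (n : ℕ) : ℝ := ∑ k ∈ Finset.range n, T.w (T.up x k)

lemma w_up_pos (h : k < T.depth x) : 0 < T.w (T.up x k) := T.w_pos _ (up_ne_root_iff.2 h)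

lemma ascent_nonneg (hn : n ≤ T.depth x) : 0 ≤ T.ascent x n :=
  Finset.sum_nonneg fun _ hk => (w_up_pos ((Finset.mem_range.1 hk).trans_le hn)).le

lemma w_up_le_ascent (h : k < T.depth x) : T.w (T.up x k) ≤ T.ascent x (k + 1) := by
  rw [ascent, Finset.sum_range_succ]
  exact le_add_of_nonneg_left (ascent_nonneg h.le)

lemma ascent_pos (hn : n ≠ 0) (hnx : n ≤ T.depth x) : 0 < T.ascent x n := by
  obtain ⟨k, rfl⟩ := Nat.exists_eq_succ_of_ne_zero hn
  exact (w_up_pos hnx).trans_le (w_up_le_ascent hnx)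

lemma eq_of_rho_nonpos (h : T.rho x y ≤ 0) : x = y := by
  have hx : T.climb x y ≤ T.depth x := climb_le_depth x y
  have hy : T.climb y x ≤ T.depth y := climb_le_depth y x
  change T.ascent x (T.climb x y) + T.ascent y (T.climb y x) ≤ 0 at h
  have hxy : T.climb x y = 0 := by
    by_contra hne
    linarith [ascent_pos hne hx, ascent_nonneg hy]
  have hyx : T.climb y x = 0 := by
    by_contra hne
    linarith [ascent_pos hne hy, ascent_nonneg hx]
  have hmeet : T.up x (T.climb x y) = T.up y (T.climb y x) := up_climb_comm x y
  rwa [hxy, hyx] at hmeet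

end PathLength

section TruncatedLength

variable {M : ℝ} {x e : V} {k : ℕ}

/-- The length of the path that leads from `x` up to and including the edge `e`, when the weight of
each of its edges is lowered by `T.w e / M`, but not below `0`. It is `0` if `e` does not lie
between `x` and the root. -/
def truncLength (T : RootedWTree V) (M : ℝ) (x e : V) : ℝ :=
  ∑ j ∈ Finset.range (T.depth x) with T.Anc e (T.up x j), (T.w (T.up x j) - T.w e / M)⁺

lemma truncLength_nonneg (M : ℝ) (x e : V) : 0 ≤ T.truncLength M x e :=
  Finset.sum_nonneg fun _ _ => posPart_nonneg _

lemma truncLength_eq_zero (M : ℝ) (h : ¬ T.Anc e x) : T.truncLength M x e = 0 := by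
  rw [truncLength, Finset.filter_false_of_mem fun j _ hj => h (hj.trans (anc_up x j)),
    Finset.sum_empty]

lemma truncLength_up (M : ℝ) (hk : k < T.depth x) :
    T.truncLength M x (T.up x k) =
      ∑ j ∈ Finset.range (k + 1), (T.w (T.up x j) - T.w (T.up x k) / M)⁺ := by
  refine Finset.sum_congr (Finset.ext fun j => ?_) fun _ _ => rfl
  rw [Finset.mem_filter, Finset.mem_range, Finset.mem_range, anc_up_up_iff hk]
  omega

lemma truncLength_eq_parent_add (M : ℝ) (hx : x ≠ T.root) (h : T.Anc e x) :
    T.truncLength M x e = T.truncLength M (T.parent x) e + (T.w x - T.w e / M)⁺ := by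
  rw [truncLength, truncLength, Finset.sum_filter, Finset.sum_filter, ← depth_parent_add_one hx,
    Finset.sum_range_succ']
  congr 1
  exact if_pos h

lemma ascent_div_two_le_truncLength (hk : k < T.depth x) (hM : 2 * T.depth x ≤ M) :
    T.ascent x (k + 1) / 2 ≤ T.truncLength M x (T.up x k) := by
  rw [truncLength_up M hk]
  refine sum_div_two_le_sum_posPart_sub ?_
  have hcard : 2 * ((k + 1 : ℕ) : ℝ) ≤ M :=
    le_trans (by gcongr; exact hk) hM
  have hM0 : 0 < M := lt_of_lt_of_le (by positivity) hcard
  calc 2 * ((Finset.range (k + 1)).card * (T.w (T.up x k) / M))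
      = 2 * ((k + 1 : ℕ) : ℝ) / M * T.w (T.up x k) := by rw [Finset.card_range]; ring
    _ ≤ T.w (T.up x k) :=
        mul_le_of_le_one_left (w_up_pos hk).le ((div_le_one hM0).2 hcard)
    _ ≤ T.ascent x (k + 1) := w_up_le_ascent hk

end TruncatedLength

section Coordinates

variable {p M : ℝ} {x y e : V} {k : ℕ}

/-- The coordinate at the edge `e` of the image of `x` under `RootedWTree.embedding`. -/
def coord (T : RootedWTree V) (p M : ℝ) (x e : V) : ℝ :=
  T.w e ^ (1 / p) * T.truncLength M x e ^ (1 - 1 / p)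

lemma coord_eq_zero (hp : 1 < p) (M : ℝ) (h : ¬ T.Anc e x) : T.coord p M x e = 0 := by
  have hq : 1 - 1 / p ≠ 0 := (sub_pos.2 ((div_lt_one (by linarith)).2 hp)).ne'
  rw [coord, truncLength_eq_zero M h, Real.zero_rpow hq, mul_zero]

lemma coord_eq_coord_parent (p : ℝ) (hM : 0 < M) (hx : x ≠ T.root) (he : T.Anc e x)
    (hw : M * T.w x ≤ T.w e) : T.coord p M x e = T.coord p M (T.parent x) e := by
  have hpart : (T.w x - T.w e / M)⁺ = 0 :=
    posPart_of_nonpos (sub_nonpos.2 ((le_div_iff₀' hM).2 hw))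
  rw [coord, coord, truncLength_eq_parent_add M hx he, hpart, add_zero]

lemma abs_coord_sub_coord_parent_rpow_le (hp : 1 ≤ p) (hk : k < T.depth x)
    (hM : 2 * T.depth x ≤ M) :
    |T.coord p M x (T.up x k) - T.coord p M (T.parent x) (T.up x k)| ^ p ≤
      2 * T.w x ^ p * (T.w (T.up x k) / T.ascent x (k + 1)) := by
  have hdepth : 0 < T.depth x := k.zero_le.trans_lt hk
  have hx : x ≠ T.root := depth_pos_iff.1 hdepth
  have hM0 : 0 < M := lt_of_lt_of_le (by positivity) hM
  have hwx := T.w_pos x hx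
  have hwe := w_up_pos hk
  have hascent := ascent_pos k.succ_ne_zero hk
  have hhalf := ascent_div_two_le_truncLength hk hM
  have hstep := truncLength_eq_parent_add M hx (anc_up x k)
  calc |T.coord p M x (T.up x k) - T.coord p M (T.parent x) (T.up x k)| ^ p
      ≤ (T.truncLength M x (T.up x k) - T.truncLength M (T.parent x) (T.up x k)) ^ p *
          (T.w (T.up x k) / T.truncLength M x (T.up x k)) :=
        abs_rpow_mul_sub_rpow_le hp hwe.le (truncLength_nonneg _ _ _)
          (hstep ▸ le_add_of_nonneg_right (posPart_nonneg _)) (by linarith)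
    _ ≤ T.w x ^ p * (T.w (T.up x k) / (T.ascent x (k + 1) / 2)) := by
        rw [hstep, add_sub_cancel_left, ← hstep]
        have hpart : (T.w x - T.w (T.up x k) / M)⁺ ≤ T.w x :=
          sup_le (sub_le_self _ (by positivity)) hwx.le
        have hlen : 0 < T.truncLength M x (T.up x k) := by linarith
        gcongr
    _ = 2 * T.w x ^ p * (T.w (T.up x k) / T.ascent x (k + 1)) := by
        field_simp

lemma sum_abs_coord_sub_coord_parent_rpow_le (hp : 1 ≤ p) (hx : x ≠ T.root)
    (hM : 2 * T.depth x ≤ M) :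
    ∑ k ∈ Finset.range (T.depth x),
        |T.coord p M x (T.up x k) - T.coord p M (T.parent x) (T.up x k)| ^ p ≤
      6 * Real.log M * T.w x ^ p := by
  obtain ⟨n, hn⟩ := Nat.exists_eq_succ_of_ne_zero (depth_pos_iff.2 hx).ne'
  have hone : (1 : ℝ) ≤ T.depth x := by exact_mod_cast depth_pos_iff.2 hx
  have hp0 : p ≠ 0 := by linarith
  have hwx := T.w_pos x hx
  have hlog : ∑ k ∈ Finset.range (T.depth x) with T.w (T.up x k) ≤ M * T.w x,
      T.w (T.up x k) / T.ascent x (k + 1) ≤ 3 * Real.log M := by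
    have hsum := sum_filter_div_partialSum_le (a := T.w ∘ T.up x) (n := n) (M := M)
      (by linarith) hwx fun k hk => (w_up_pos (by omega)).le
    rw [← Nat.succ_eq_add_one, ← hn] at hsum
    exact hsum.trans (one_add_log_mul_le_three_mul_log (by linarith) (by linarith) hM)
  calc ∑ k ∈ Finset.range (T.depth x),
        |T.coord p M x (T.up x k) - T.coord p M (T.parent x) (T.up x k)| ^ p
      ≤ ∑ k ∈ Finset.range (T.depth x) with T.w (T.up x k) ≤ M * T.w x,
          2 * T.w x ^ p * (T.w (T.up x k) / T.ascent x (k + 1)) := by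
        rw [Finset.sum_filter]
        refine Finset.sum_le_sum fun k hk => ?_
        split_ifs with hw
        · exact abs_coord_sub_coord_parent_rpow_le hp (Finset.mem_range.1 hk) hM
        · rw [coord_eq_coord_parent p (by linarith) hx (anc_up x k) (not_le.1 hw).le, sub_self,
            abs_zero, Real.zero_rpow hp0]
    _ ≤ 2 * T.w x ^ p * (3 * Real.log M) := by
        rw [← Finset.mul_sum]
        gcongr
    _ = 6 * Real.log M * T.w x ^ p := by ring

lemma w_mul_ascent_rpow_le_abs_coord_sub_rpow (hp : 1 < p) (hk : k < T.climb x y)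
    (hM : 2 * T.depth x ≤ M) :
    T.w (T.up x k) * T.ascent x (k + 1) ^ (p - 1) ≤
      2 ^ (p - 1) * |T.coord p M x (T.up x k) - T.coord p M y (T.up x k)| ^ p := by
  have hkx : k < T.depth x := hk.trans_le (climb_le_depth x y)
  have hwe : 0 < T.w (T.up x k) := w_up_pos hkx
  have hlen : 0 ≤ T.truncLength M x (T.up x k) := truncLength_nonneg _ _ _
  have hascent : 0 ≤ T.ascent x (k + 1) := ascent_nonneg hkx
  rw [coord_eq_zero hp M (not_anc_up_of_lt_climb hk), sub_zero, coord,
    abs_of_nonneg (by positivity), rpow_one_div_mul_rpow_rpow (by linarith) hwe.le hlen,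
    mul_left_comm, ← Real.mul_rpow (by norm_num) hlen]
  gcongr
  linarith [ascent_div_two_le_truncLength hkx hM]

lemma ascent_climb_rpow_le (hp : 1 < p) (y : V) (hM : 2 * T.depth x ≤ M) :
    T.ascent x (T.climb x y) ^ p ≤
      4 ^ p * ∑ k ∈ Finset.range (T.depth x),
        |T.coord p M x (T.up x k) - T.coord p M y (T.up x k)| ^ p := by
  have hclimb : T.climb x y ≤ T.depth x := climb_le_depth x y
  calc T.ascent x (T.climb x y) ^ p
      ≤ p * ∑ k ∈ Finset.range (T.climb x y),
          T.w (T.up x k) * T.ascent x (k + 1) ^ (p - 1) :=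
        rpow_sum_range_le hp.le fun k hk => (w_up_pos (hk.trans_le hclimb)).le
    _ ≤ p * ∑ k ∈ Finset.range (T.climb x y),
          2 ^ (p - 1) * |T.coord p M x (T.up x k) - T.coord p M y (T.up x k)| ^ p := by
        refine mul_le_mul_of_nonneg_left (Finset.sum_le_sum fun k hk => ?_) (by linarith)
        exact w_mul_ascent_rpow_le_abs_coord_sub_rpow hp (Finset.mem_range.1 hk) hM
    _ = p * 2 ^ (p - 1) * ∑ k ∈ Finset.range (T.climb x y),
          |T.coord p M x (T.up x k) - T.coord p M y (T.up x k)| ^ p := by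
        rw [← Finset.mul_sum, mul_assoc]
    _ ≤ 4 ^ p * ∑ k ∈ Finset.range (T.depth x),
          |T.coord p M x (T.up x k) - T.coord p M y (T.up x k)| ^ p := by
        gcongr
        exact mul_two_rpow_sub_one_le_four_rpow hp.le

end Coordinates

section Embedding

variable {p M : ℝ} {x y : V}

/-- The edges on the path from `x` to the root, an edge being identified with its lower vertex. -/
def rootPath (T : RootedWTree V) (x : V) : Finset {v : V // v ≠ T.root} :=
  ((Finset.range (T.depth x)).image (T.up x)).subtype (· ≠ T.root)

lemma mem_rootPath {e : {v : V // v ≠ T.root}} : e ∈ T.rootPath x ↔ T.Anc e x := by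
  simp only [rootPath, Finset.mem_subtype, Finset.mem_image, Finset.mem_range]
  exact ⟨fun ⟨k, _, hk⟩ => ⟨k, hk⟩, fun ⟨k, hk⟩ => ⟨k, up_ne_root_iff.1 (hk ▸ e.2), hk⟩⟩

lemma sum_rootPath (x : V) (f : V → ℝ) :
    ∑ e ∈ T.rootPath x, f e = ∑ k ∈ Finset.range (T.depth x), f (T.up x k) := by
  rw [rootPath, Finset.sum_subtype_of_mem, Finset.sum_image]
  · rw [Finset.coe_range]
    exact up_injOn x
  · intro e he
    obtain ⟨k, hk, rfl⟩ := Finset.mem_image.1 he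
    exact up_ne_root_iff.2 (Finset.mem_range.1 hk)

lemma memℓp_coord (hp : 1 < p) (M : ℝ) (x : V) :
    Memℓp (fun e : {v : V // v ≠ T.root} => T.coord p M x e) (ENNReal.ofReal p) := by
  refine (memℓp_zero ((T.rootPath x).finite_toSet.subset fun e he => ?_)).of_exponent_ge
    zero_le
  exact mem_rootPath.2 (not_imp_comm.1 (coord_eq_zero hp M) he)

/-- The map of the vertices into `ℓ^p(E)` that realises the distortion bound when `M` is at least
twice every depth; edges are identified with their lower vertices. -/
def embedding (T : RootedWTree V) (hp : 1 < p) (M : ℝ) (x : V) :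
    lp (fun _ : {v : V // v ≠ T.root} => ℝ) (ENNReal.ofReal p) :=
  ⟨_, memℓp_coord hp M x⟩

lemma sum_abs_coord_sub_rpow_le_norm_rpow (hp : 1 < p) (M : ℝ) (x y : V) :
    ∑ k ∈ Finset.range (T.depth x),
        |T.coord p M x (T.up x k) - T.coord p M y (T.up x k)| ^ p ≤
      ‖T.embedding hp M x - T.embedding hp M y‖ ^ p := by
  have htoReal : (ENNReal.ofReal p).toReal = p := ENNReal.toReal_ofReal (by linarith)
  have h := lp.sum_rpow_le_norm_rpow (by rw [htoReal]; linarith)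
    (T.embedding hp M x - T.embedding hp M y) (T.rootPath x)
  rw [htoReal] at h
  rw [← sum_rootPath x fun e => |T.coord p M x e - T.coord p M y e| ^ p]
  exact h

lemma norm_embedding_sub_rpow_eq_sum_of_anc (hp : 1 < p) (M : ℝ) (hyx : T.Anc y x) :
    ‖T.embedding hp M x - T.embedding hp M y‖ ^ p =
      ∑ k ∈ Finset.range (T.depth x),
        |T.coord p M x (T.up x k) - T.coord p M y (T.up x k)| ^ p := by
  have htoReal : (ENNReal.ofReal p).toReal = p := ENNReal.toReal_ofReal (by linarith)
  have h := lp.norm_rpow_eq_tsum (by rw [htoReal]; linarith)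
    (T.embedding hp M x - T.embedding hp M y)
  rw [htoReal] at h
  rw [← sum_rootPath x fun e => |T.coord p M x e - T.coord p M y e| ^ p, h]
  refine tsum_eq_sum fun e he => ?_
  have hex : ¬ T.Anc e x := mt mem_rootPath.2 he
  have hcoord : T.coord p M x e - T.coord p M y e = 0 := by
    rw [coord_eq_zero hp M hex, coord_eq_zero hp M fun hey => hex (hey.trans hyx), sub_zero]
  change ‖T.coord p M x e - T.coord p M y e‖ ^ p = 0
  rw [hcoord, norm_zero, Real.zero_rpow (by linarith)]

lemma norm_embedding_sub_embedding_parent_le (hp : 1 < p) (hx : x ≠ T.root)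
    (hM : 2 * T.depth x ≤ M) :
    ‖T.embedding hp M x - T.embedding hp M (T.parent x)‖ ≤
      (6 * Real.log M) ^ (1 / p) * T.w x := by
  have hp0 : 0 < p := by linarith
  have hwx := T.w_pos x hx
  have hone : (1 : ℝ) ≤ T.depth x := by exact_mod_cast depth_pos_iff.2 hx
  have hlog : 0 ≤ Real.log M := Real.log_nonneg (by linarith)
  refine (Real.rpow_le_rpow_iff (lp.norm_nonneg' _) (by positivity) hp0).1 ?_
  rw [norm_embedding_sub_rpow_eq_sum_of_anc hp M (anc_parent x),
    Real.mul_rpow (by positivity) hwx.le, ← Real.rpow_mul (by positivity),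
    one_div_mul_cancel hp0.ne', Real.rpow_one]
  exact sum_abs_coord_sub_coord_parent_rpow_le hp.le hx hM

lemma norm_embedding_sub_embedding_up_le (hp : 1 < p) (hM : ∀ x, 2 * T.depth x ≤ M) {n : ℕ}
    (hn : n ≤ T.depth x) :
    ‖T.embedding hp M x - T.embedding hp M (T.up x n)‖ ≤
      (6 * Real.log M) ^ (1 / p) * T.ascent x n := by
  have : Fact (1 ≤ ENNReal.ofReal p) := ⟨by simpa using hp.le⟩
  induction n with
  | zero => simp [up, ascent]
  | succ n ih =>
    have hstep := norm_embedding_sub_embedding_parent_le hp (up_ne_root_iff.2 hn) (hM _)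
    rw [← up_succ] at hstep
    rw [ascent, Finset.sum_range_succ, mul_add]
    exact (norm_sub_le_norm_sub_add_norm_sub _ _ _).trans
      (add_le_add (ih (n.le_succ.trans hn)) hstep)

lemma ascent_climb_le_norm_embedding_sub (hp : 1 < p) (y : V) (hM : 2 * T.depth x ≤ M) :
    T.ascent x (T.climb x y) ≤ 4 * ‖T.embedding hp M x - T.embedding hp M y‖ := by
  have hnorm : 0 ≤ ‖T.embedding hp M x - T.embedding hp M y‖ := lp.norm_nonneg' _
  refine (Real.rpow_le_rpow_iff (ascent_nonneg (climb_le_depth x y)) (by positivity)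
    (by linarith : 0 < p)).1 ?_
  rw [Real.mul_rpow (by norm_num) hnorm]
  exact (ascent_climb_rpow_le hp y hM).trans <|
    mul_le_mul_of_nonneg_left (sum_abs_coord_sub_rpow_le_norm_rpow hp M x y) (by positivity)

lemma lipUB_embedding (hp : 1 < p) (hM : ∀ x, 2 * T.depth x ≤ M) :
    LipUB T.rho (fun a b => ‖a - b‖) (T.embedding hp M) ((6 * Real.log M) ^ (1 / p)) := by
  have : Fact (1 ≤ ENNReal.ofReal p) := ⟨by simpa using hp.le⟩
  intro x y
  have hx := norm_embedding_sub_embedding_up_le hp hM (climb_le_depth x y)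
  have hy := norm_embedding_sub_embedding_up_le hp hM (climb_le_depth y x)
  rw [← up_climb_comm x y, norm_sub_rev] at hy
  exact (norm_sub_le_norm_sub_add_norm_sub _ _ _).trans
    ((add_le_add hx hy).trans_eq (mul_add _ _ _).symm)

lemma coLipUB_embedding (hp : 1 < p) (hM : ∀ x, 2 * T.depth x ≤ M) :
    CoLipUB T.rho (fun a b => ‖a - b‖) (T.embedding hp M) 8 := by
  have : Fact (1 ≤ ENNReal.ofReal p) := ⟨by simpa using hp.le⟩
  intro x y
  have hx := ascent_climb_le_norm_embedding_sub hp y (hM x)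
  have hy := ascent_climb_le_norm_embedding_sub hp x (hM y)
  rw [norm_sub_rev] at hy
  calc T.rho x y = T.ascent x (T.climb x y) + T.ascent y (T.climb y x) := rfl
    _ ≤ 8 * ‖T.embedding hp M x - T.embedding hp M y‖ := by linarith

end Embedding

end RootedWTree

theorem cdiam_embedding_general
    {V : Type*} (T : RootedWTree V) (p : ℝ) (hp : 1 < p)
    (Δ : ℕ) (hΔ1 : 1 ≤ Δ) (hΔ : ∀ x, T.depth x ≤ Δ) :
    cDist V (lp (fun _ : {v : V // v ≠ T.root} => ℝ) (ENNReal.ofReal p)) T.rho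
        (fun a b => ‖a - b‖) ≤
      ENNReal.ofReal (8 * (6 * Real.log (2 * Δ)) ^ (1 / p)) := by
  have hM : ∀ x, 2 * (T.depth x : ℝ) ≤ 2 * Δ := fun x => by
    gcongr
    exact hΔ x
  rw [mul_comm (8 : ℝ)]
  exact cDist_le_of_lipUB_of_coLipUB (fun _ _ => RootedWTree.eq_of_rho_nonpos) (by simp)
    (RootedWTree.lipUB_embedding hp hM) (RootedWTree.coLipUB_embedding hp hM)

/-- Corollary 3.5: a weighted tree whose combinatorial diameter `Δ`
(diameter for unit weights) is finite and at least 1 satisfies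
`c_{ℓ^p(E)}(T) ≤ 96 (6 ln (2Δ))^{1/p}`; here the edges `E` are identified with
the non-root vertices, and the combinatorial distance between `x` and `y` is
`climb x y + climb y x`, the number of edges on the path joining them. -/
theorem cdiam_embedding
    {V : Type*} (T : RootedWTree V) (p : ℝ) (hp : 1 < p)
    (Δ : ℕ) (hΔ1 : 1 ≤ Δ)
    (hΔ : IsGreatest {n : ℕ | ∃ x y : V, n = T.climb x y + T.climb y x} Δ) :
    cDist V (lp (fun _ : {v : V // v ≠ T.root} => ℝ) (ENNReal.ofReal p)) T.rho
        (fun a b => ‖a - b‖) ≤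
      ENNReal.ofReal (96 * (6 * Real.log (2 * Δ)) ^ (1 / p)) := by
  have hlog : 0 ≤ Real.log (2 * Δ) := by exact_mod_cast Real.log_natCast_nonneg (2 * Δ)
  have hdepth (x : V) : T.depth x ≤ Δ :=
    (RootedWTree.climb_root x).ge.trans ((Nat.le_add_right _ _).trans (hΔ.2 ⟨x, T.root, rfl⟩))
  exact (cdiam_embedding_general T p hp Δ hΔ1 hdepth).trans
    (ENNReal.ofReal_le_ofReal (by gcongr; norm_num))

end
end

section
/- Let T = (V,E,w) be a weighted tree rooted at some vertex and let κ ≥ 1 be an integer. Then every κ-caterpillar coloring of T is a 1/(4κ)-strong coloring. -/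
/-!
The path from `x` to `y` is a union of two ascending paths, each contained in a branch, so it meets
at most `2κ` colors. A color whose length on the path is below `ρ(x, y) / (4κ)` is *light*; the
light colors together contribute at most `2κ · ρ(x, y) / (4κ) = ρ(x, y) / 2`, so the remaining
colors account for at least half of the path.
-/

open Set Function Filter

open scoped ENNReal

attribute [local instance] Classical.propDecidable

noncomputable section

section ColorWeight

variable {V C M : Type*} [AddCommMonoid M]

/-- The total weight of the entries of `L` (with multiplicity) that have color `c`. For
`L = T.pathEdges x y` and `w = T.w` this is, by unfolding, `T.colorLen χ c x y`. -/
def colorWeight (w : V → M) (χ : V → C) (L : List V) (c : C) : M :=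
  ((L.filter (fun e => χ e = c)).map w).sum

lemma sum_colorWeight_eq_sum_filter_mem (w : V → M) (χ : V → C) (L : List V) (S : Finset C) :
    ∑ c ∈ S, colorWeight w χ L c = ((L.filter (fun e => χ e ∈ S)).map w).sum := by
  induction L with
  | nil => simp [colorWeight]
  | cons a L ih =>
    have colorWeight_cons (c : C) :
        colorWeight w χ (a :: L) c = (if χ a = c then w a else 0) + colorWeight w χ L c := by
      by_cases hc : χ a = c <;> simp [colorWeight, hc]
    simp only [colorWeight_cons, Finset.sum_add_distrib, Finset.sum_ite_eq, ih]
    by_cases ha : χ a ∈ S <;> simp [ha]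

lemma sum_light_le_card_nsmul [LinearOrder M] [IsOrderedAddMonoid M] (w : V → M) {χ : V → C}
    {L : List V} {S : Finset C} (hS : ∀ e ∈ L, χ e ∈ S) {t : M} (ht : 0 ≤ t) :
    ((L.filter (fun e => ¬ t ≤ colorWeight w χ L (χ e))).map w).sum ≤ S.card • t := by
  set light := S.filter (fun c => ¬ t ≤ colorWeight w χ L c) with hlight
  calc ((L.filter (fun e => ¬ t ≤ colorWeight w χ L (χ e))).map w).sum
      = ((L.filter (fun e => χ e ∈ light)).map w).sum := by
        congr 2
        exact List.filter_congr fun e he => by simp [hlight, hS e he]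
    _ = ∑ c ∈ light, colorWeight w χ L c := (sum_colorWeight_eq_sum_filter_mem w χ L light).symm
    _ ≤ light.card • t :=
        Finset.sum_le_card_nsmul _ _ _ fun _ hc => (not_le.1 (Finset.mem_filter.1 hc).2).le
    _ ≤ S.card • t := nsmul_le_nsmul_left ht (Finset.card_filter_le _ _)

lemma sum_le_sum_heavy_add_card_nsmul [LinearOrder M] [IsOrderedAddMonoid M] (w : V → M)
    {χ : V → C} {L : List V} {S : Finset C} (hS : ∀ e ∈ L, χ e ∈ S) {t : M} (ht : 0 ≤ t) :
    (L.map w).sum ≤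
      ((L.filter (fun e => t ≤ colorWeight w χ L (χ e))).map w).sum + S.card • t := by
  rw [← List.sum_map_filter_add_sum_map_filter_not (fun e => t ≤ colorWeight w χ L (χ e)) w L]
  gcongr
  exact sum_light_le_card_nsmul w hS ht

end ColorWeight

namespace RootedWTree

variable {V C : Type*} (T : RootedWTree V)

lemma anc_up_of_le (x : V) {m n : ℕ} (hmn : m ≤ n) : T.Anc (T.up x n) (T.up x m) :=
  ⟨n - m, by simp only [up, ← iterate_add_apply, Nat.sub_add_cancel hmn]⟩

lemma isChain_range_up (x : V) : IsChain T.Anc (range (T.up x)) := by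
  rintro _ ⟨m, rfl⟩ _ ⟨n, rfl⟩ _
  exact (le_total n m).imp (T.anc_up_of_le x) (T.anc_up_of_le x)

lemma up_ne_root_of_lt_climb {x y : V} {k : ℕ} (hk : k < T.climb x y) : T.up x k ≠ T.root :=
  fun h => Nat.find_min (T.exists_anc x y) hk (h ▸ T.reach y)

lemma mem_pathEdges {x y e : V} :
    e ∈ T.pathEdges x y ↔
      (∃ k < T.climb x y, T.up x k = e) ∨ ∃ k < T.climb y x, T.up y k = e := by
  simp [pathEdges]

lemma ne_root_of_mem_pathEdges {x y e : V} (he : e ∈ T.pathEdges x y) : e ≠ T.root := by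
  rcases T.mem_pathEdges.1 he with ⟨k, hk, rfl⟩ | ⟨k, hk, rfl⟩ <;>
    exact T.up_ne_root_of_lt_climb hk

lemma sum_map_w_pathEdges (x y : V) : ((T.pathEdges x y).map T.w).sum = T.rho x y := by
  simp only [pathEdges, List.map_append, List.sum_append, List.map_map]
  -- A `Finset.range` sum unfolds to the sum of the corresponding `List.range`.
  rfl

lemma rho_nonneg (x y : V) : 0 ≤ T.rho x y := by
  rw [← sum_map_w_pathEdges]
  refine List.sum_nonneg (List.forall_mem_map.2 fun e he => ?_)
  exact (T.w_pos e (T.ne_root_of_mem_pathEdges he)).le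

namespace IsCaterpillar

variable {T} {χ : V → C} {κ : ℕ}

lemma exists_finset_up (hχ : T.IsCaterpillar χ κ) (x : V) :
    ∃ S : Finset C, S.card ≤ κ ∧ ∀ k, T.up x k ≠ T.root → χ (T.up x k) ∈ S := by
  obtain ⟨P, hP, hxP⟩ := (T.isChain_range_up x).exists_maxChain
  obtain ⟨S, hcard, hS⟩ := hχ.2 P hP
  exact ⟨S, hcard, fun k => hS _ (hxP (mem_range_self k))⟩

lemma exists_finset_pathEdges (hχ : T.IsCaterpillar χ κ) (x y : V) :
    ∃ S : Finset C, S.card ≤ 2 * κ ∧ ∀ e ∈ T.pathEdges x y, χ e ∈ S := by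
  obtain ⟨Sx, hcardx, hSx⟩ := hχ.exists_finset_up x
  obtain ⟨Sy, hcardy, hSy⟩ := hχ.exists_finset_up y
  refine ⟨Sx ∪ Sy, (Finset.card_union_le Sx Sy).trans (by lia), fun e he => ?_⟩
  have hroot := T.ne_root_of_mem_pathEdges he
  rcases T.mem_pathEdges.1 he with ⟨k, -, rfl⟩ | ⟨k, -, rfl⟩
  · exact Finset.mem_union_left _ (hSx k hroot)
  · exact Finset.mem_union_right _ (hSy k hroot)

end IsCaterpillar

lemma rho_le_sum_heavy_add_card_mul {χ : V → C} {x y : V} {S : Finset C}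
    (hS : ∀ e ∈ T.pathEdges x y, χ e ∈ S) {t : ℝ} (ht : 0 ≤ t) :
    T.rho x y ≤
      (((T.pathEdges x y).filter (fun e => t ≤ T.colorLen χ (χ e) x y)).map T.w).sum +
        S.card * t := by
  rw [← sum_map_w_pathEdges, ← nsmul_eq_mul]
  exact sum_le_sum_heavy_add_card_nsmul T.w hS ht

end RootedWTree

/-- Lemma 3.6: every `κ`-caterpillar coloring of a weighted rooted
tree is a `1/(4κ)`-strong coloring. -/
theorem caterpillar_is_strong
    {V C : Type*} (T : RootedWTree V) (κ : ℕ) (hκ : 1 ≤ κ)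
    (χ : V → C) (hχ : T.IsCaterpillar χ κ) :
    T.IsStrong χ (1 / (4 * (κ : ℝ))) := by
  refine ⟨hχ.1, fun x y _ => ?_⟩
  obtain ⟨S, hcard, hS⟩ := hχ.exists_finset_pathEdges x y
  set t := 1 / (4 * (κ : ℝ)) * T.rho x y with ht
  have ht_nonneg : 0 ≤ t := mul_nonneg (by positivity) (T.rho_nonneg x y)
  have hlight : S.card * t ≤ T.rho x y / 2 :=
    calc S.card * t ≤ (2 * κ : ℝ) * t := by gcongr; exact_mod_cast hcard
      _ = T.rho x y / 2 := by
        rw [ht]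
        field_simp
        norm_num
  linarith [T.rho_le_sum_heavy_add_card_mul hS ht_nonneg]

end
end

section
/- Let X and Y be real Banach spaces, let Z ⊆ X, and let f : Z → Y be a surjective uniform quotient map that is Lipschitz for large distances. Then there exists a constant A ∈ (0,∞), depending only on f, such that for every connected simple unweighted graph G (equipped with its shortest-path metric), qc_X(G) ≤ A·qc_Y(G). -/
open Set Function Filter

open scoped ENNReal

attribute [local instance] Classical.propDecidable

noncomputable section

def LipQuotientWith {α β : Type*} (dα : α → α → ℝ) (dβ : β → β → ℝ) (f : α → β)
    (L C : ℝ) : Prop :=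
  Function.Surjective f ∧
  (∀ (x a : α) (r : ℝ), 0 < r → dα x a ≤ r → dβ (f x) (f a) ≤ L * r) ∧
  (∀ (x : α) (y : β) (r : ℝ), 0 < r → dβ (f x) y ≤ r / C → ∃ a : α, dα x a ≤ r ∧ f a = y)

def qcSet (X : Type*) [PseudoMetricSpace X] (β : Type*) (dβ : β → β → ℝ) : Set ℝ :=
  {q | ∃ (Z : Set X) (f : Z → β) (L C : ℝ), 0 < L ∧ 0 < C ∧
    LipQuotientWith (fun a b : Z => dist a.1 b.1) dβ f L C ∧ q = L * C}

def qcDist (X : Type*) [PseudoMetricSpace X] (β : Type*) (dβ : β → β → ℝ) : ℝ≥0∞ :=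
  ⨅ q ∈ qcSet X β dβ, ENNReal.ofReal q
def UniformQuotientMap {α β : Type*} (dα : α → α → ℝ) (dβ : β → β → ℝ) (f : α → β) : Prop :=
  Function.Surjective f ∧
  ∃ ρ ω : ℝ → ℝ,
    (∀ s t : ℝ, 0 < s → s ≤ t → ρ s ≤ ρ t) ∧ (∀ s t : ℝ, 0 < s → s ≤ t → ω s ≤ ω t) ∧
    (∀ t : ℝ, 0 < t → 0 < ρ t) ∧ (∀ t : ℝ, 0 < t → 0 < ω t) ∧
    Filter.Tendsto ω (nhdsWithin 0 (Set.Ioi (0:ℝ))) (nhds 0) ∧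
    ∀ (x : α) (r : ℝ), 0 < r →
      (∀ y : β, dβ (f x) y ≤ ρ r → ∃ a : α, dα x a ≤ r ∧ f a = y) ∧
      (∀ a : α, dα x a ≤ r → dβ (f x) (f a) ≤ ω r)

def LipLargeDist {α β : Type*} (dα : α → α → ℝ) (dβ : β → β → ℝ) (f : α → β) : Prop :=
  ∀ s : ℝ, 0 < s → ∃ M : ℝ, ∀ a b : α, s ≤ dα a b → dβ (f a) (f b) ≤ M * dα a b

/-!
A uniform quotient map onto a normed space can be lifted along segments in steps of a fixed size, so
a map that is moreover Lipschitz for large distances is a Lipschitz quotient map up to additive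
errors. The nonzero distances of a graph are at least `1`, so the additive errors are absorbed into
the multiplicative constants once the graph is blown up by a large enough factor. The codistortion
is at least `1` as soon as the graph has two vertices, which makes the loss a constant factor.
-/

namespace LipQuotientWith

theorem comp_equiv {α β γ : Type*} {dα : α → α → ℝ} {dβ : β → β → ℝ} {f : α → β} {L C : ℝ}
    (hf : LipQuotientWith dα dβ f L C) (e : γ ≃ α) :
    LipQuotientWith (fun x y => dα (e x) (e y)) dβ (f ∘ e) L C := by
  refine ⟨hf.1.comp e.surjective, fun x a => hf.2.1 (e x) (e a), fun x y r hr hxy => ?_⟩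
  obtain ⟨a, hxa, hfa⟩ := hf.2.2 (e x) y r hr hxy
  exact ⟨e.symm a, by simpa using hxa, by simpa using hfa⟩

variable {α β : Type*} [PseudoMetricSpace α] {dβ : β → β → ℝ} {f : α → β} {L C : ℝ}

theorem le_mul_dist (hf : LipQuotientWith dist dβ f L C) (hL : 0 < L) (x a : α) :
    dβ (f x) (f a) ≤ L * dist x a := by
  refine le_of_forall_pos_le_add fun ε hε => ?_
  have hε' : 0 < ε / L := div_pos hε hL
  calc dβ (f x) (f a) ≤ L * (dist x a + ε / L) :=
        hf.2.1 x a _ (add_pos_of_nonneg_of_pos dist_nonneg hε') (by linarith)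
    _ = L * dist x a + ε := by rw [mul_add, mul_div_cancel₀ _ hL.ne']

theorem exists_lift (hf : LipQuotientWith dist dβ f L C) (hC : 0 < C) {x : α} {y : β}
    (hxy : 0 < dβ (f x) y) : ∃ a, dist x a ≤ C * dβ (f x) y ∧ f a = y :=
  hf.2.2 x y _ (mul_pos hC hxy) (mul_div_cancel_left₀ _ hC.ne').ge

theorem one_le_mul (hf : LipQuotientWith dist dβ f L C) (hL : 0 < L) (hC : 0 < C) {x : α} {y : β}
    (hxy : 0 < dβ (f x) y) : 1 ≤ L * C := by
  obtain ⟨a, hxa, rfl⟩ := hf.exists_lift hC hxy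
  refine le_of_mul_le_mul_right ?_ hxy
  calc 1 * dβ (f x) (f a) ≤ L * dist x a := by simpa only [one_mul] using hf.le_mul_dist hL x a
    _ ≤ L * (C * dβ (f x) (f a)) := mul_le_mul_of_nonneg_left hxa hL.le
    _ = L * C * dβ (f x) (f a) := (mul_assoc _ _ _).symm

theorem of_le_mul_dist (hsurj : Surjective f) (hL : 0 ≤ L) (hC : 0 < C)
    (hle : ∀ x a, dβ (f x) (f a) ≤ L * dist x a)
    (hlift : ∀ x y, f x ≠ y → ∃ a, dist x a ≤ C * dβ (f x) y ∧ f a = y) :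
    LipQuotientWith dist dβ f L C := by
  refine ⟨hsurj, fun x a r _ hxa => (hle x a).trans (mul_le_mul_of_nonneg_left hxa hL),
    fun x y r hr hxy => ?_⟩
  by_cases hne : f x = y
  · exact ⟨x, by simpa only [dist_self] using hr.le, hne⟩
  · obtain ⟨a, hxa, hfa⟩ := hlift x y hne
    exact ⟨a, hxa.trans ((le_div_iff₀' hC).1 hxy), hfa⟩

end LipQuotientWith

section QuotientCodistortion

variable {X Y β : Type*} [PseudoMetricSpace X] [PseudoMetricSpace Y] {dβ : β → β → ℝ}

theorem qcSet_subtype_subset (Z : Set X) : qcSet Z β dβ ⊆ qcSet X β dβ := by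
  rintro _ ⟨W, f, L, C, hL, hC, hf, rfl⟩
  exact ⟨{x | ∃ hx : x ∈ Z, (⟨x, hx⟩ : Z) ∈ W}, _, L, C, hL, hC,
    hf.comp_equiv (Equiv.subtypeSubtypeEquivSubtypeExists (· ∈ Z) (· ∈ W)).symm, rfl⟩

theorem qcDist_le_mul_of_forall_exists_le {A : ℝ} (hA : 0 < A)
    (h : ∀ q ∈ qcSet Y β dβ, ∃ q' ∈ qcSet X β dβ, q' ≤ A * q) :
    qcDist X β dβ ≤ ENNReal.ofReal A * qcDist Y β dβ := by
  have hA0 : ENNReal.ofReal A ≠ 0 := (ENNReal.ofReal_pos.2 hA).ne'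
  simp only [qcDist, ENNReal.mul_iInf_of_ne hA0 ENNReal.ofReal_ne_top]
  refine le_iInf₂ fun q hq => ?_
  obtain ⟨q', hq', hle⟩ := h q hq
  rw [← ENNReal.ofReal_mul hA.le]
  exact (iInf₂_le q' hq').trans (ENNReal.ofReal_le_ofReal hle)

end QuotientCodistortion

/-- A function that vanishes on the diagonal and is at least `1` off it: the two properties of the
path metric of a connected graph that control the additive errors of a large-scale quotient map. -/
structure OneSeparated {β : Type*} (d : β → β → ℝ) : Prop where
  dist_self : ∀ v, d v v = 0
  one_le : ∀ {u v}, u ≠ v → 1 ≤ d u v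

theorem OneSeparated.of_connected {V : Type*} {G : SimpleGraph V} (hG : G.Connected) :
    OneSeparated fun u v => (G.dist u v : ℝ) where
  dist_self v := by simp only [SimpleGraph.dist_self, Nat.cast_zero]
  one_le huv := by exact_mod_cast hG.pos_dist_of_ne huv

theorem LipQuotientWith.of_subsingleton {α β : Type*} [PseudoMetricSpace α] [Subsingleton β]
    {dβ : β → β → ℝ} {f : α → β} {L C : ℝ} (hd : OneSeparated dβ) (hsurj : Surjective f)
    (hL : 0 ≤ L) (hC : 0 < C) : LipQuotientWith dist dβ f L C := by
  refine .of_le_mul_dist hsurj hL hC (fun x a => ?_)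
    fun x y hne => (hne (Subsingleton.elim _ _)).elim
  rw [Subsingleton.elim (f x) (f a), hd.dist_self]
  exact mul_nonneg hL dist_nonneg

/-- A Lipschitz quotient map up to additive errors: `L` and `K` bound the expansion of `f`, while
`C` and `R` bound how far one has to move in the domain to reach a given point of the codomain. -/
structure LargeScaleLipQuotientWith {α β : Type*} [PseudoMetricSpace α] [PseudoMetricSpace β]
    (f : α → β) (L K C R : ℝ) : Prop where
  surjective : Surjective f
  dist_le : ∀ x a, dist (f x) (f a) ≤ L * dist x a + K
  exists_lift : ∀ x y, ∃ a, dist x a ≤ C * dist (f x) y + R ∧ f a = y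

namespace LargeScaleLipQuotientWith

section PseudoMetric

variable {α γ : Type*} [PseudoMetricSpace α] [PseudoMetricSpace γ] {f : α → γ} {L K C R : ℝ}

theorem restrictPreimage (hf : LargeScaleLipQuotientWith f L K C R) (W : Set γ) :
    LargeScaleLipQuotientWith (W.restrictPreimage f) L K C R where
  surjective := W.restrictPreimage_surjective hf.surjective
  dist_le x a := hf.dist_le x a
  exists_lift x w := by
    obtain ⟨a, hxa, hfa⟩ := hf.exists_lift x w
    exact ⟨⟨a, mem_preimage.2 (hfa.symm ▸ w.2)⟩, hxa, Subtype.ext hfa⟩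

theorem comp_lipQuotientWith {β : Type*} {dβ : β → β → ℝ} {g : γ → β} {M N : ℝ}
    (hf : LargeScaleLipQuotientWith f L K C R) (hg : LipQuotientWith dist dβ g M N)
    (hd : OneSeparated dβ) (hL : 0 ≤ L) (hC : 0 < C) (hR : 0 ≤ R) (hM : 0 < M) (hN : 0 < N)
    (hMK : M * K < 1) :
    LipQuotientWith dist dβ (g ∘ f) (M * L / (1 - M * K)) (C * N + R) := by
  have hMK' : 0 < 1 - M * K := sub_pos.2 hMK
  refine .of_le_mul_dist (hg.1.comp hf.surjective) (by positivity) (by positivity)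
    (fun x a => ?_) fun x v hne => ?_
  · by_cases heq : g (f x) = g (f a)
    · rw [comp_apply, comp_apply, heq, hd.dist_self]
      positivity
    have hone : 1 ≤ dβ (g (f x)) (g (f a)) := hd.one_le heq
    rw [div_mul_eq_mul_div, le_div_iff₀ hMK', comp_apply, comp_apply]
    have hK : 0 ≤ K := by simpa only [dist_self, mul_zero, zero_add] using hf.dist_le x x
    have hexpand : dβ (g (f x)) (g (f a)) ≤ M * (L * dist x a + K) :=
      (hg.le_mul_dist hM _ _).trans (mul_le_mul_of_nonneg_left (hf.dist_le x a) hM.le)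
    have habsorb : M * K ≤ M * K * dβ (g (f x)) (g (f a)) :=
      le_mul_of_one_le_right (mul_nonneg hM.le hK) hone
    linarith
  · have hone : 1 ≤ dβ (g (f x)) v := hd.one_le hne
    obtain ⟨y, hxy, rfl⟩ := hg.exists_lift hN (zero_lt_one.trans_le hone)
    obtain ⟨a, hxa, rfl⟩ := hf.exists_lift x y
    refine ⟨a, ?_, rfl⟩
    calc dist x a ≤ C * dist (f x) (f a) + R := hxa
      _ ≤ C * (N * dβ (g (f x)) (g (f a))) + R * dβ (g (f x)) (g (f a)) :=
        add_le_add (mul_le_mul_of_nonneg_left hxy hC.le) (le_mul_of_one_le_right hR hone)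
      _ = (C * N + R) * dβ (g (f x)) (g (f a)) := by ring

end PseudoMetric

variable {X Y β : Type*} [PseudoMetricSpace X] [SeminormedAddCommGroup Y] [NormedSpace ℝ Y]
  {f : X → Y} {L K C R : ℝ}

theorem inv_smul (hf : LargeScaleLipQuotientWith f L K C R) {c : ℝ} (hc : 0 < c) :
    LargeScaleLipQuotientWith (fun x => c⁻¹ • f x) (c⁻¹ * L) (c⁻¹ * K) (C * c) R where
  surjective y := by
    obtain ⟨x, hx⟩ := hf.surjective (c • y)
    exact ⟨x, by simp only [hx, inv_smul_smul₀ hc.ne']⟩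
  dist_le x a := by
    rw [dist_smul₀, Real.norm_of_nonneg (inv_nonneg.2 hc.le), mul_assoc, ← mul_add]
    exact mul_le_mul_of_nonneg_left (hf.dist_le x a) (inv_nonneg.2 hc.le)
  exists_lift x y := by
    obtain ⟨a, hxa, hfa⟩ := hf.exists_lift x (c • y)
    have hdist : dist (f x) (c • y) = c * dist (c⁻¹ • f x) y := by
      rw [← Real.norm_of_nonneg hc.le, ← dist_smul₀, Real.norm_of_nonneg hc.le,
        smul_inv_smul₀ hc.ne']
    exact ⟨a, by rwa [mul_assoc, ← hdist], by simp only [hfa, inv_smul_smul₀ hc.ne']⟩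

theorem exists_mem_qcSet_le {dβ : β → β → ℝ} (hf : LargeScaleLipQuotientWith f L K C R)
    (hL : 0 < L) (hK : 0 ≤ K) (hC : 0 < C) (hR : 0 ≤ R) (hd : OneSeparated dβ) {q : ℝ}
    (hq : q ∈ qcSet Y β dβ) : ∃ q' ∈ qcSet X β dβ, q' ≤ L * (C * (K + 1) + R) * q := by
  obtain ⟨W, g, M, N, hM, hN, hg, rfl⟩ := hq
  have hc : 0 < M * (K + 1) := by positivity
  have hres := (hf.inv_smul hc).restrictPreimage W
  rcases subsingleton_or_nontrivial β with _ | _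
  -- On a one-point space `M * N` may be less than `1`, but there any positive constants work.
  · refine ⟨_, ⟨_, _, L * (C * (K + 1) + R) * (M * N), 1, by positivity, one_pos,
      .of_subsingleton hd (hg.1.comp hres.surjective) (by positivity) one_pos, rfl⟩, (mul_one _).le⟩
  have hMN : 1 ≤ M * N := by
    obtain ⟨u, v, huv⟩ := exists_pair_ne β
    obtain ⟨w, rfl⟩ := hg.1 u
    exact hg.one_le_mul hM hN (zero_lt_one.trans_le (hd.one_le huv))
  have hsmall : 1 - M * ((M * (K + 1))⁻¹ * K) = (K + 1)⁻¹ := by field_simp; ring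
  have hlip : M * ((M * (K + 1))⁻¹ * L) / (1 - M * ((M * (K + 1))⁻¹ * K)) = L := by
    rw [hsmall]; field_simp
  have hcomp := hres.comp_lipQuotientWith hg hd (by positivity) (by positivity) hR hM hN
    (sub_pos.1 (hsmall ▸ by positivity))
  rw [hlip] at hcomp
  refine ⟨_, ⟨_, _, L, _, hL, by positivity, hcomp, rfl⟩, ?_⟩
  calc L * (C * (M * (K + 1)) * N + R) ≤ L * (C * (M * (K + 1)) * N + R * (M * N)) := by
        gcongr; exact le_mul_of_one_le_right hR hMN
    _ = L * (C * (K + 1) + R) * (M * N) := by ring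

end LargeScaleLipQuotientWith

section Lifting

variable {α Y : Type*} [PseudoMetricSpace α] [SeminormedAddCommGroup Y] [NormedSpace ℝ Y]
  {f : α → Y} {δ r : ℝ}

theorem exists_lift_of_dist_le_mul (hδ : 0 ≤ δ)
    (hlift : ∀ x y, dist (f x) y ≤ δ → ∃ a, dist x a ≤ r ∧ f a = y) (n : ℕ) (x : α) (y : Y)
    (hxy : dist (f x) y ≤ (n + 1) * δ) : ∃ a, dist x a ≤ (n + 1) * r ∧ f a = y := by
  induction n generalizing x with
  | zero => simpa using hlift x y (by simpa using hxy)
  | succ n ih =>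
    push_cast at hxy ⊢
    obtain ⟨z, hxz, hzy⟩ : ∃ z, dist (f x) z ≤ δ ∧ dist z y ≤ (n + 1) * δ :=
      exists_dist_le_le hδ (by positivity) (by linarith)
    obtain ⟨b, hxb, rfl⟩ := hlift x z hxz
    obtain ⟨a, hba, hfa⟩ := ih b hzy
    exact ⟨a, by linarith [dist_triangle x b a], hfa⟩

theorem exists_lift_of_dist_le (hδ : 0 < δ) (hr : 0 ≤ r)
    (hlift : ∀ x y, dist (f x) y ≤ δ → ∃ a, dist x a ≤ r ∧ f a = y) (x : α) (y : Y) :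
    ∃ a, dist x a ≤ r / δ * dist (f x) y + r ∧ f a = y := by
  set n := ⌊dist (f x) y / δ⌋₊
  obtain ⟨a, hxa, hfa⟩ := exists_lift_of_dist_le_mul hδ.le hlift n x y
    ((div_le_iff₀ hδ).1 (Nat.lt_floor_add_one _).le)
  refine ⟨a, hxa.trans ?_, hfa⟩
  calc (n + 1) * r ≤ (dist (f x) y / δ + 1) * r := by
        gcongr; exact Nat.floor_le (by positivity)
    _ = r / δ * dist (f x) y + r := by ring

theorem UniformQuotientMap.exists_largeScaleLipQuotientWith (hf : UniformQuotientMap dist dist f)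
    (hlip : LipLargeDist dist dist f) :
    ∃ L K C R : ℝ, 0 < L ∧ 0 ≤ K ∧ 0 < C ∧ 0 ≤ R ∧ LargeScaleLipQuotientWith f L K C R := by
  obtain ⟨hsurj, ρ, ω, -, -, hρ, hω, -, hball⟩ := hf
  obtain ⟨M, hM⟩ := hlip 1 one_pos
  have hρ1 : 0 < ρ 1 := hρ 1 one_pos
  have hω1 : 0 < ω 1 := hω 1 one_pos
  refine ⟨max M 1, ω 1, 1 / ρ 1, 1, by positivity, hω1.le, by positivity, zero_le_one, hsurj,
    fun x a => ?_, exists_lift_of_dist_le hρ1 zero_le_one fun x => (hball x 1 one_pos).1⟩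
  rcases le_total (dist x a) 1 with hnear | hfar
  · exact ((hball x 1 one_pos).2 a hnear).trans (le_add_of_nonneg_left (by positivity))
  · calc dist (f x) (f a) ≤ M * dist x a := hM x a hfar
      _ ≤ max M 1 * dist x a := by gcongr; exact le_max_left M 1
      _ ≤ max M 1 * dist x a + ω 1 := le_add_of_nonneg_right hω1.le

end Lifting

theorem uniform_quotient_graph_transfer_general {X Y : Type*} [PseudoMetricSpace X]
    [SeminormedAddCommGroup Y] [NormedSpace ℝ Y] {Z : Set X} {f : Z → Y}
    (hf : UniformQuotientMap (fun a b : Z => dist a.1 b.1) (fun a b : Y => dist a b) f)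
    (hlip : LipLargeDist (fun a b : Z => dist a.1 b.1) (fun a b : Y => dist a b) f) :
    ∃ A : ℝ, 0 < A ∧ ∀ (β : Type*) (dβ : β → β → ℝ), OneSeparated dβ →
      qcDist X β dβ ≤ ENNReal.ofReal A * qcDist Y β dβ := by
  obtain ⟨L, K, C, R, hL, hK, hC, hR, hquot⟩ :=
    UniformQuotientMap.exists_largeScaleLipQuotientWith hf hlip
  have hA : 0 < L * (C * (K + 1) + R) := by positivity
  refine ⟨_, hA, fun β dβ hd => qcDist_le_mul_of_forall_exists_le hA fun q hq => ?_⟩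
  obtain ⟨q', hq', hle⟩ := hquot.exists_mem_qcSet_le hL hK hC hR hd hq
  exact ⟨q', qcSet_subtype_subset Z hq', hle⟩

/-- Proposition 4.9: if a Banach space `Y` is a uniform subquotient
of a Banach space `X` via a uniform quotient map that is Lipschitz for large
distances, then there is a constant `A` such that `qc_X(G) ≤ A qc_Y(G)` for every
connected simple unweighted graph `G`. -/
theorem uniform_quotient_graph_transfer
    (X : Type*) [NormedAddCommGroup X] [NormedSpace ℝ X] [CompleteSpace X]
    (Y : Type*) [NormedAddCommGroup Y] [NormedSpace ℝ Y] [CompleteSpace Y]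
    (Z : Set X) (f : Z → Y)
    (hf : UniformQuotientMap (fun a b : Z => dist a.1 b.1) (fun a b : Y => dist a b) f)
    (hlip : LipLargeDist (fun a b : Z => dist a.1 b.1) (fun a b : Y => dist a b) f) :
    ∃ A : ℝ, 0 < A ∧ ∀ (V : Type) (G : SimpleGraph V), G.Connected →
      qcDist X V (fun u v => (G.dist u v : ℝ)) ≤
        ENNReal.ofReal A * qcDist Y V (fun u v => (G.dist u v : ℝ)) := by
  obtain ⟨A, hA, hle⟩ := uniform_quotient_graph_transfer_general hf hlip
  exact ⟨A, hA, fun V G hG => hle V _ (.of_connected hG)⟩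

end
end

section
/- Let p ∈ (1,∞) and let X be a real Banach space admitting an equivalent norm with property (β_p) with some constant γ > 0. Suppose a Banach space Y is a uniform subquotient of X via a uniform quotient map that is Lipschitz for large distances. Then for every q ∈ (p,∞), ℓ_q is not a uniform subquotient of Y via a uniform quotient map that is Lipschitz for large distances. -/
open Set Function Filter

open scoped ENNReal

attribute [local instance] Classical.propDecidable

noncomputable section

def rolewiczSetN {Y : Type*} [AddCommGroup Y] (N : Y → ℝ) (t : ℝ) : Set ℝ :=
  {s | ∃ x : Y, N x ≤ 1 ∧ ∃ y : ℕ → Y, (∀ i, N (y i) ≤ 1) ∧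
    (∀ n m : ℕ, n ≠ m → t ≤ N (y n - y m)) ∧ s = ⨅ i, N (x - y i) / 2}

def rolewiczModN {Y : Type*} [AddCommGroup Y] (N : Y → ℝ) (t : ℝ) : ℝ :=
  1 - sSup (rolewiczSetN N t)

def IsEquivNorm (Y : Type*) [SeminormedAddCommGroup Y] [NormedSpace ℝ Y] (N : Y → ℝ) : Prop :=
  (∀ x y : Y, N (x + y) ≤ N x + N y) ∧ (∀ (c : ℝ) (x : Y), N (c • x) = |c| * N x) ∧
  ∃ a b : ℝ, 0 < a ∧ a ≤ b ∧ ∀ y : Y, a * ‖y‖ ≤ N y ∧ N y ≤ b * ‖y‖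

def AdmitsBetaNorm (Y : Type*) [SeminormedAddCommGroup Y] [NormedSpace ℝ Y] : Prop :=
  ∃ N : Y → ℝ, IsEquivNorm Y N ∧ ∀ t : ℝ, 0 < t → t ≤ 2 → 0 < rolewiczModN N t

def AdmitsBetaPNorm (Y : Type*) [SeminormedAddCommGroup Y] [NormedSpace ℝ Y] (p γ : ℝ) : Prop :=
  ∃ N : Y → ℝ, IsEquivNorm Y N ∧
    ∀ t : ℝ, 0 < t → t ≤ 2 → (rolewiczSetN N t).Nonempty → γ * t ^ p ≤ rolewiczModN N t
/-!
Property (β_p) has a purely metric consequence: if `z` and a `τ r`-separated sequence `(bᵢ)` lie in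
a ball of radius `r` around `a`, then some `bᵢ` is at distance at most `(2 - γ τ ^ p) r` from `z`.
In `ℓ_q`, on the other hand, if `u` is a unit vector, then `v` and `v + 3 s u` are joined by the
paths `v, v + s u, v + 2 s u + s t eᵢ, v + 3 s u`, whose steps have length at most
`s (1 + 2 t ^ q)` for basis vectors `eᵢ` far enough along, although their third points are
`s t`-separated. Lift these paths through a coarse Lipschitz quotient map: the lifted third points
are still separated, so along one of the lifts the first two steps can be shortened by a
proportion of order `t ^ p`. As `q > p`, for small `t` this gain exceeds the cost `t ^ q` of the
detour, so that every constant for lifting large distances can be lowered by a fixed proportion.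
But lifting constants are bounded away from `0`, because the map is Lipschitz for large distances.
-/

/-! ### Coarse Lipschitz quotient maps -/

section CoarseLipschitz

variable {α β δ : Type*} {dα : α → α → ℝ} {dβ : β → β → ℝ} {dδ : δ → δ → ℝ}
  {f : α → β} {g : β → δ}

/-- `f` is Lipschitz with constant `L` up to an additive constant. As in `UniformQuotientMap`, the
distances are explicit arguments, so that the same space can be considered under several norms. -/
def CoarseLipschitzWith (L : ℝ) (dα : α → α → ℝ) (dβ : β → β → ℝ) (f : α → β) : Prop :=
  ∃ M : ℝ, ∀ a b, dβ (f a) (f b) ≤ L * dα a b + M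

/-- `f` is co-Lipschitz with constant `c` up to an additive constant: starting from any `a`, a point
`y` of the target lifts to a point at distance at most `c * dβ (f a) y` plus a constant. -/
def CoarseColipschitzWith (c : ℝ) (dα : α → α → ℝ) (dβ : β → β → ℝ) (f : α → β) : Prop :=
  ∃ K : ℝ, ∀ a y, ∃ b, f b = y ∧ dα a b ≤ c * dβ (f a) y + K

/-- A coarse Lipschitz quotient map: the behaviour at large distances that is common to all uniform
quotient maps that are Lipschitz for large distances. -/
structure IsCoarseLipschitzQuotient (dα : α → α → ℝ) (dβ : β → β → ℝ) (f : α → β) : Prop where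
  surjective : Surjective f
  exists_lipschitz : ∃ L, 0 ≤ L ∧ CoarseLipschitzWith L dα dβ f
  exists_colipschitz : ∃ c, 0 ≤ c ∧ CoarseColipschitzWith c dα dβ f

theorem CoarseLipschitzWith.comp {L L' : ℝ} (hL' : 0 ≤ L') (hg : CoarseLipschitzWith L' dβ dδ g)
    (hf : CoarseLipschitzWith L dα dβ f) : CoarseLipschitzWith (L' * L) dα dδ (g ∘ f) := by
  obtain ⟨M', hM'⟩ := hg
  obtain ⟨M, hM⟩ := hf
  refine ⟨L' * M + M', fun a b => ?_⟩
  calc dδ (g (f a)) (g (f b)) ≤ L' * dβ (f a) (f b) + M' := hM' _ _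
    _ ≤ L' * (L * dα a b + M) + M' := by gcongr; exact hM a b
    _ = L' * L * dα a b + (L' * M + M') := by ring

theorem CoarseColipschitzWith.comp {c c' : ℝ} (hc : 0 ≤ c) (hg : CoarseColipschitzWith c' dβ dδ g)
    (hf : CoarseColipschitzWith c dα dβ f) : CoarseColipschitzWith (c * c') dα dδ (g ∘ f) := by
  obtain ⟨K', hK'⟩ := hg
  obtain ⟨K, hK⟩ := hf
  refine ⟨c * K' + K, fun a y => ?_⟩
  obtain ⟨w, rfl, hw⟩ := hK' (f a) y
  obtain ⟨b, rfl, hb⟩ := hK a w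
  refine ⟨b, rfl, ?_⟩
  calc dα a b ≤ c * dβ (f a) (f b) + K := hb
    _ ≤ c * (c' * dδ (g (f a)) (g (f b)) + K') + K := by gcongr
    _ = c * c' * dδ (g (f a)) (g (f b)) + (c * K' + K) := by ring

theorem IsCoarseLipschitzQuotient.comp (hg : IsCoarseLipschitzQuotient dβ dδ g)
    (hf : IsCoarseLipschitzQuotient dα dβ f) : IsCoarseLipschitzQuotient dα dδ (g ∘ f) := by
  obtain ⟨L', hL', hgL⟩ := hg.exists_lipschitz
  obtain ⟨L, hL, hfL⟩ := hf.exists_lipschitz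
  obtain ⟨c', hc', hgc⟩ := hg.exists_colipschitz
  obtain ⟨c, hc, hfc⟩ := hf.exists_colipschitz
  exact ⟨hg.surjective.comp hf.surjective, ⟨_, mul_nonneg hL' hL, hgL.comp hL' hfL⟩,
    ⟨_, mul_nonneg hc hc', hgc.comp hc hfc⟩⟩

theorem IsCoarseLipschitzQuotient.restrictPreimage (hf : IsCoarseLipschitzQuotient dα dβ f)
    (t : Set β) : IsCoarseLipschitzQuotient (fun a b : f ⁻¹' t => dα a b)
      (fun x y : t => dβ x y) (t.restrictPreimage f) := by
  obtain ⟨L, hL, M, hM⟩ := hf.exists_lipschitz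
  obtain ⟨c, hc, K, hK⟩ := hf.exists_colipschitz
  refine ⟨hf.surjective.restrictPreimage t, ⟨L, hL, M, fun a b => hM a b⟩,
    ⟨c, hc, K, fun a y => ?_⟩⟩
  obtain ⟨b, hb, hab⟩ := hK a y
  exact ⟨⟨b, mem_preimage.2 (hb ▸ y.2)⟩, Subtype.ext hb, hab⟩

theorem isCoarseLipschitzQuotient_id {d d' : α → α → ℝ} {L c : ℝ} (hL : 0 ≤ L) (hc : 0 ≤ c)
    (hd' : ∀ a b, d' a b ≤ L * d a b) (hd : ∀ a b, d a b ≤ c * d' a b) :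
    IsCoarseLipschitzQuotient d d' id :=
  ⟨surjective_id, ⟨L, hL, 0, fun a b => by simpa using hd' a b⟩,
    ⟨c, hc, 0, fun a y => ⟨y, rfl, by simpa using hd a y⟩⟩⟩

theorem CoarseLipschitzWith.exists_forall_half_le {L t : ℝ} (hf : CoarseLipschitzWith L dα dβ f)
    (ht : 0 < t) :
    ∃ R, ∀ s, R ≤ s → ∀ a b, s * t ≤ dβ (f a) (f b) → s * t / 2 ≤ L * dα a b := by
  obtain ⟨M, hM⟩ := hf
  refine ⟨2 * M / t, fun s hs a b hab => ?_⟩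
  have hMs : 2 * M ≤ s * t := (div_le_iff₀ ht).1 hs
  linarith [hM a b]

theorem CoarseColipschitzWith.exists_forall_lift {c ε : ℝ}
    (hf : CoarseColipschitzWith c dα dβ f) (hc : 0 < c) (hε : 0 < ε) :
    ∃ R, ∀ s, R ≤ s → ∀ a y, dβ (f a) y ≤ s * (1 + ε) →
      ∃ b, f b = y ∧ dα a b ≤ c * s * (1 + 2 * ε) := by
  obtain ⟨K, hK⟩ := hf
  refine ⟨K / (c * ε), fun s hs a y hay => ?_⟩
  have hKs : K ≤ s * (c * ε) := (div_le_iff₀ (by positivity)).1 hs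
  obtain ⟨b, hb, hab⟩ := hK a y
  refine ⟨b, hb, ?_⟩
  calc dα a b ≤ c * dβ (f a) y + K := hab
    _ ≤ c * (s * (1 + ε)) + s * (c * ε) := by gcongr
    _ = c * s * (1 + 2 * ε) := by ring

theorem CoarseColipschitzWith.of_forall_le_dist {c c' R : ℝ}
    (hf : CoarseColipschitzWith c dα dβ f) (hdβ : ∀ x y, 0 ≤ dβ x y) (hc : 0 ≤ c)
    (hR : ∀ a y, R ≤ dβ (f a) y → ∃ b, f b = y ∧ dα a b ≤ c' * dβ (f a) y) :
    CoarseColipschitzWith c' dα dβ f := by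
  obtain ⟨K, hK⟩ := hf
  refine ⟨|c * R + |c'| * R + K|, fun a y => ?_⟩
  rcases le_or_gt R (dβ (f a) y) with hlarge | hsmall
  · obtain ⟨b, hb, hab⟩ := hR a y hlarge
    exact ⟨b, hb, hab.trans (le_add_of_nonneg_right (abs_nonneg _))⟩
  · obtain ⟨b, hb, hab⟩ := hK a y
    have hc' : -(|c'| * R) ≤ c' * dβ (f a) y := by
      calc -(|c'| * R) ≤ -(|c'| * dβ (f a) y) := by gcongr
        _ = -|c'| * dβ (f a) y := by ring
        _ ≤ c' * dβ (f a) y := mul_le_mul_of_nonneg_right (neg_abs_le c') (hdβ _ _)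
    have hcR : c * dβ (f a) y ≤ c * R := by gcongr
    exact ⟨b, hb, by linarith [le_abs_self (c * R + |c'| * R + K)]⟩

end CoarseLipschitz

theorem one_le_mul_of_coarseLipschitzWith_of_coarseColipschitzWith {α V : Type*} [Nonempty α]
    [NormedAddCommGroup V] [NormedSpace ℝ V] [Nontrivial V] {d : α → α → ℝ} {f : α → V} {L c : ℝ}
    (hL : 0 ≤ L) (hLip : CoarseLipschitzWith L d dist f) (hco : CoarseColipschitzWith c d dist f) :
    1 ≤ L * c := by
  obtain ⟨M, hM⟩ := hLip
  obtain ⟨K, hK⟩ := hco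
  have hbound : ∀ r, 0 ≤ r → r * (1 - L * c) ≤ L * K + M := by
    intro r hr
    obtain ⟨v, hv⟩ := exists_norm_eq V hr
    obtain ⟨a⟩ := ‹Nonempty α›
    obtain ⟨b, hb, hab⟩ := hK a (f a + v)
    have hr_le := hM a b
    rw [hb, dist_self_add_right, hv] at hr_le
    rw [dist_self_add_right, hv] at hab
    linarith [mul_le_mul_of_nonneg_left hab hL]
  by_contra! hlt
  have hpos : 0 < 1 - L * c := by linarith
  have hcontra := hbound ((|L * K + M| + 1) / (1 - L * c)) (by positivity)
  rw [div_mul_cancel₀ _ hpos.ne'] at hcontra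
  linarith [le_abs_self (L * K + M)]

/-! ### Uniform quotient maps -/

theorem exists_lift_of_dist_le_mul_s13 {α V : Type*} [PseudoMetricSpace α] [SeminormedAddCommGroup V]
    [NormedSpace ℝ V] {f : α → V} {ρ : ℝ} (hρ : 0 ≤ ρ)
    (hlift : ∀ a y, dist (f a) y ≤ ρ → ∃ b, dist a b ≤ 1 ∧ f b = y) (n : ℕ) (a : α) (y : V)
    (hay : dist (f a) y ≤ n * ρ) : ∃ b, f b = y ∧ dist a b ≤ n + 1 := by
  induction n generalizing a with
  | zero =>
    obtain ⟨b, hab, hb⟩ := hlift a y (hay.trans (by simpa using hρ))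
    exact ⟨b, hb, by simpa using hab⟩
  | succ n ih =>
    push_cast at hay ⊢
    obtain ⟨w, haw, hwy⟩ := exists_dist_le_le hρ (by positivity : 0 ≤ n * ρ)
      (hay.trans_eq (by ring))
    obtain ⟨a', haa', rfl⟩ := hlift a w haw
    obtain ⟨b, hb, ha'b⟩ := ih a' hwy
    exact ⟨b, hb, by linarith [dist_triangle a a' b]⟩

theorem LipLargeDist.exists_coarseLipschitzWith {α β : Type*} [PseudoMetricSpace α]
    [PseudoMetricSpace β] {f : α → β} {C : ℝ} (hlip : LipLargeDist dist dist f)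
    (hC : ∀ a b, dist a b ≤ 1 → dist (f a) (f b) ≤ C) :
    ∃ L, 0 ≤ L ∧ CoarseLipschitzWith L dist dist f := by
  obtain ⟨M, hM⟩ := hlip 1 one_pos
  refine ⟨|M|, abs_nonneg M, |C|, fun a b => ?_⟩
  rcases le_total 1 (dist a b) with hfar | hnear
  · calc dist (f a) (f b) ≤ M * dist a b := hM a b hfar
      _ ≤ |M| * dist a b := by gcongr; exact le_abs_self M
      _ ≤ |M| * dist a b + |C| := le_add_of_nonneg_right (abs_nonneg C)
  · calc dist (f a) (f b) ≤ |C| := (hC a b hnear).trans (le_abs_self C)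
      _ ≤ |M| * dist a b + |C| := le_add_of_nonneg_left (by positivity)

theorem UniformQuotientMap.isCoarseLipschitzQuotient {α V : Type*} [PseudoMetricSpace α]
    [SeminormedAddCommGroup V] [NormedSpace ℝ V] {f : α → V}
    (hf : UniformQuotientMap dist dist f) (hlip : LipLargeDist dist dist f) :
    IsCoarseLipschitzQuotient dist dist f := by
  obtain ⟨hsurj, ρ, ω, -, -, hρ, -, -, hball⟩ := hf
  have hρ1 : 0 < ρ 1 := hρ 1 one_pos
  refine ⟨hsurj, hlip.exists_coarseLipschitzWith fun a b => (hball a 1 one_pos).2 b,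
    (ρ 1)⁻¹, by positivity, 2, fun a y => ?_⟩
  set n := ⌈dist (f a) y / ρ 1⌉₊
  obtain ⟨b, hb, hab⟩ := exists_lift_of_dist_le_mul_s13 hρ1.le (fun a => (hball a 1 one_pos).1) n a y
    ((div_le_iff₀ hρ1).1 (Nat.le_ceil _))
  have hn : (n : ℝ) ≤ (ρ 1)⁻¹ * dist (f a) y + 1 := by
    rw [inv_mul_eq_div]
    exact (Nat.ceil_lt_add_one (by positivity)).le
  exact ⟨b, hb, by linarith⟩

/-! ### Forks -/

/-- The metric content of property (β): if `z` and a `τ r`-separated sequence `b` lie in a ball of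
radius `r` around `a`, then some `b i` is nearer to `z` by `κ r` than the triangle inequality
through `a` gives. -/
def HasForkBound {α : Type*} (d : α → α → ℝ) (τ κ : ℝ) : Prop :=
  ∀ ⦃r : ℝ⦄, 0 < r → ∀ (z a : α) (b : ℕ → α), d z a ≤ r → (∀ i, d a (b i) ≤ r) →
    (Pairwise fun i j => τ * r ≤ d (b i) (b j)) → ∃ i, d z (b i) ≤ r * (2 - κ)

theorem HasForkBound.comp {α β : Type*} {d : α → α → ℝ} {τ κ : ℝ} (hd : HasForkBound d τ κ)
    (φ : β → α) : HasForkBound (fun x y => d (φ x) (φ y)) τ κ :=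
  fun _ hr z a b => hd hr (φ z) (φ a) (φ ∘ b)

/-- The opposite of `HasForkBound` in a normed space: from any point of the sphere there are
`1`-separated directions in which one can move back and forth by `t`, without leaving the ball of
radius `1 + ε`. -/
def HasFlatForks (V : Type*) [SeminormedAddCommGroup V] [NormedSpace ℝ V] (t ε : ℝ) : Prop :=
  ∀ u : V, ‖u‖ = 1 → ∃ e : ℕ → V, (Pairwise fun i j => 1 ≤ ‖e i - e j‖) ∧
    ∀ i, ‖u + t • e i‖ ≤ 1 + ε ∧ ‖u - t • e i‖ ≤ 1 + ε

section Rolewicz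

variable {X : Type*} [AddCommGroup X] [Module ℝ X] {N : Seminorm ℝ X} {t κ : ℝ}

theorem le_two_of_nonempty_rolewiczSetN (h : (rolewiczSetN N t).Nonempty) : t ≤ 2 := by
  obtain ⟨-, -, -, y, hy, hsep, -⟩ := h
  linarith [hsep 0 1 zero_ne_one, map_sub_le_add N (y 0) (y 1), hy 0, hy 1]

theorem bddAbove_rolewiczSetN : BddAbove (rolewiczSetN N t) := by
  refine ⟨1, ?_⟩
  rintro - ⟨x, hx, y, hy, -, rfl⟩
  have hbdd : BddBelow (range fun i => N (x - y i) / 2) :=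
    ⟨0, forall_mem_range.2 fun i => div_nonneg (apply_nonneg N _) zero_le_two⟩
  exact (ciInf_le hbdd 0).trans (by linarith [map_sub_le_add N x (y 0), hy 0])

theorem exists_le_two_sub_of_le_rolewiczModN (hκ : 0 < κ)
    (hmod : (rolewiczSetN N t).Nonempty → κ ≤ rolewiczModN N t) {x : X} {y : ℕ → X} (hx : N x ≤ 1)
    (hy : ∀ i, N (y i) ≤ 1) (hsep : Pairwise fun i j => t ≤ N (y i - y j)) :
    ∃ i, N (x - y i) ≤ 2 - κ := by
  have hmem : (⨅ i, N (x - y i) / 2) ∈ rolewiczSetN N t :=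
    ⟨x, hx, y, hy, fun _ _ hij => hsep hij, rfl⟩
  have hsup := le_csSup bddAbove_rolewiczSetN hmem
  have hκ_le : κ ≤ 1 - sSup (rolewiczSetN N t) := hmod ⟨_, hmem⟩
  obtain ⟨i, hi⟩ := exists_lt_of_ciInf_lt
    (show (⨅ i, N (x - y i) / 2) < 1 - κ / 2 by linarith)
  exact ⟨i, by linarith⟩

theorem hasForkBound_of_le_rolewiczModN (hκ : 0 < κ)
    (hmod : (rolewiczSetN N t).Nonempty → κ ≤ rolewiczModN N t) :
    HasForkBound (fun x y => N (x - y)) t κ := by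
  intro r hr z a b hz hb hsep
  have hscale : ∀ x, N (r⁻¹ • x) = N x / r := fun x => by
    rw [map_smul_eq_mul, norm_inv, Real.norm_of_nonneg hr.le, inv_mul_eq_div]
  obtain ⟨i, hi⟩ := exists_le_two_sub_of_le_rolewiczModN hκ hmod
    (x := r⁻¹ • (z - a)) (y := fun i => r⁻¹ • (b i - a))
    (by rwa [hscale, div_le_one hr])
    (fun i => by rw [hscale, div_le_one hr, map_sub_rev]; exact hb i)
    (fun i j hij => by
      simpa only [← smul_sub, sub_sub_sub_cancel_right, hscale, le_div_iff₀ hr] using hsep hij)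
  rw [← smul_sub, sub_sub_sub_cancel_right, hscale, div_le_iff₀' hr] at hi
  exact ⟨i, hi⟩

end Rolewicz

theorem AdmitsBetaPNorm.exists_seminorm_hasForkBound {X : Type*} [SeminormedAddCommGroup X]
    [NormedSpace ℝ X] {p γ : ℝ} (hX : AdmitsBetaPNorm X p γ) (hγ : 0 < γ) :
    ∃ N : Seminorm ℝ X,
      (∀ Z : Set X, IsCoarseLipschitzQuotient (fun x y : Z => N (x - y)) dist id) ∧
      ∀ τ, 0 < τ → HasForkBound (fun x y => N (x - y)) τ (γ * τ ^ p) := by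
  obtain ⟨N, ⟨hadd, hsmul, a, b, ha, hab, hN⟩, hβ⟩ := hX
  refine ⟨Seminorm.of N hadd hsmul, fun Z => ?_, fun τ hτ => ?_⟩
  · refine isCoarseLipschitzQuotient_id (inv_nonneg.2 ha.le) (ha.le.trans hab)
      (fun x y => ?_) fun x y => ?_ <;> rw [Subtype.dist_eq, dist_eq_norm]
    · rw [← div_eq_inv_mul, le_div_iff₀' ha]
      exact (hN _).1
    · exact (hN _).2
  · exact hasForkBound_of_le_rolewiczModN (by positivity)
      fun h => hβ τ hτ (le_two_of_nonempty_rolewiczSetN h) h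

section Lp

theorem lp_norm_add_single_rpow {ι : Type*} [DecidableEq ι] {E : ι → Type*}
    [∀ i, NormedAddCommGroup (E i)] {p : ℝ≥0∞} (hp : 0 < p.toReal) (u : lp E p) (i : ι) (a : E i) :
    ‖u + lp.single p i a‖ ^ p.toReal
      = ‖u‖ ^ p.toReal - ‖u i‖ ^ p.toReal + ‖u i + a‖ ^ p.toReal := by
  have hcoord : (u + lp.single p i a) i = u i + a := by simp
  have hrest : u + lp.single p i a - lp.single p i (u i + a) = u - lp.single p i (u i) := by
    rw [lp.single_add]; abel
  have hu := lp.norm_sub_norm_compl_sub_single hp u {i}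
  have hua := lp.norm_sub_norm_compl_sub_single hp (u + lp.single p i a) {i}
  rw [Finset.sum_singleton, Finset.sum_singleton, hcoord, hrest] at hua
  rw [Finset.sum_singleton, Finset.sum_singleton] at hu
  linarith

variable {p : ℝ≥0∞}

theorem tendsto_norm_lp_apply_atTop_zero (hp : 0 < p.toReal) (u : lp (fun _ : ℕ => ℝ) p) :
    Tendsto (fun n => ‖u n‖) atTop (nhds 0) := by
  have hpow := (((lp.memℓp u).summable hp).tendsto_atTop_zero).rpow_const
    (p := p.toReal⁻¹) (Or.inr (by positivity))
  rw [Real.zero_rpow (by positivity)] at hpow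
  exact hpow.congr fun n => Real.rpow_rpow_inv (norm_nonneg _) hp.ne'

theorem tendsto_norm_lp_add_single_rpow (hp : 0 < p.toReal) (u : lp (fun _ : ℕ => ℝ) p) (a : ℝ) :
    Tendsto (fun n => ‖u + lp.single p n a‖ ^ p.toReal) atTop
      (nhds (‖u‖ ^ p.toReal + |a| ^ p.toReal)) := by
  have hu := tendsto_norm_lp_apply_atTop_zero hp u
  have hua : Tendsto (fun n => ‖u n + a‖) atTop (nhds |a|) := by
    simpa using ((tendsto_zero_iff_norm_tendsto_zero.2 hu).add_const a).norm
  have hlim := ((hu.rpow_const (Or.inr hp.le)).const_sub (‖u‖ ^ p.toReal)).add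
    (hua.rpow_const (p := p.toReal) (Or.inr hp.le))
  rw [Real.zero_rpow hp.ne', sub_zero] at hlim
  exact hlim.congr fun n => (lp_norm_add_single_rpow hp u n a).symm

theorem eventually_norm_lp_add_single_le (hp : 1 ≤ p.toReal) {u : lp (fun _ : ℕ => ℝ) p}
    (hu : ‖u‖ = 1) {a : ℝ} (ha : a ≠ 0) :
    ∀ᶠ n in atTop, ‖u + lp.single p n a‖ ≤ 1 + 2 * |a| ^ p.toReal := by
  have hp0 : 0 < p.toReal := zero_lt_one.trans_le hp
  have hapos : 0 < |a| ^ p.toReal := by positivity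
  have hlim := tendsto_norm_lp_add_single_rpow hp0 u a
  rw [hu, Real.one_rpow] at hlim
  filter_upwards [hlim.eventually_le_const (show _ < 1 + 2 * |a| ^ p.toReal by linarith)]
    with n hn
  refine (Real.rpow_le_rpow_iff (lp.norm_nonneg' _) (by positivity) hp0).1 (hn.trans ?_)
  exact Real.self_le_rpow_of_one_le (by linarith) hp

theorem hasFlatForks_lp [Fact (1 ≤ p)] (hp : p ≠ ∞) {t : ℝ} (ht : 0 < t) :
    HasFlatForks (lp (fun _ : ℕ => ℝ) p) t (2 * t ^ p.toReal) := by
  intro u hu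
  have hp1 : 1 ≤ p.toReal := by
    simpa using ENNReal.toReal_mono hp (Fact.out : 1 ≤ p)
  obtain ⟨n₀, hn₀⟩ := eventually_atTop.1
    ((eventually_norm_lp_add_single_le hp1 hu ht.ne').and
      (eventually_norm_lp_add_single_le hp1 hu (neg_ne_zero.2 ht.ne')))
  have hsingle : ∀ n, t • lp.single (E := fun _ : ℕ => ℝ) p n (1 : ℝ) = lp.single p n t :=
    fun n => by rw [← lp.single_smul, smul_eq_mul, mul_one]
  refine ⟨fun i => lp.single p (n₀ + i) (1 : ℝ), fun i j hij => ?_, fun i => ?_⟩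
  · have happly := lp.norm_apply_le_norm (zero_lt_one.trans_le Fact.out).ne'
      (lp.single (E := fun _ : ℕ => ℝ) p (n₀ + i) (1 : ℝ) - lp.single p (n₀ + j) (1 : ℝ)) (n₀ + i)
    simpa [lp.single_apply, Pi.single_apply, hij] using happly
  · have hn := hn₀ (n₀ + i) (Nat.le_add_right _ _)
    rwa [abs_neg, abs_of_pos ht, lp.single_neg, ← sub_eq_add_neg, ← hsingle] at hn

theorem nontrivial_lp [Fact (1 ≤ p)] : Nontrivial (lp (fun _ : ℕ => ℝ) p) := by
  refine ⟨lp.single p 0 (1 : ℝ), 0, norm_ne_zero_iff.1 ?_⟩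
  rw [lp.norm_single (zero_lt_one.trans_le Fact.out), norm_one]
  exact one_ne_zero

end Lp

/-! ### Lifting forks -/

theorem exists_rpow_le_mul_rpow {p q A : ℝ} (hpq : p < q) (hA : 0 < A) :
    ∃ t, 0 < t ∧ t ≤ 1 ∧ t ^ q ≤ A * t ^ p := by
  have hlim : Tendsto (fun t : ℝ => t ^ (q - p)) (nhdsWithin 0 (Ioi 0)) (nhds 0) := by
    have := (Real.continuousAt_rpow_const 0 (q - p) (Or.inr (sub_nonneg.2 hpq.le))).tendsto
    rw [Real.zero_rpow (sub_pos.2 hpq).ne'] at this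
    exact this.mono_left nhdsWithin_le_nhds
  obtain ⟨t, htA, ht0, ht1⟩ :=
    ((hlim.eventually_le_const hA).and (Ioc_mem_nhdsGT one_pos)).exists
  refine ⟨t, ht0, ht1, ?_⟩
  calc t ^ q = t ^ (q - p) * t ^ p := by rw [← Real.rpow_add ht0, sub_add_cancel]
    _ ≤ A * t ^ p := by gcongr

theorem exists_mem_mul_one_sub_lt_of_isGLB {S : Set ℝ} {m η : ℝ} (hS : IsGLB S m) (hm : 0 < m)
    (hη : 0 < η) : ∃ c ∈ S, 0 < c ∧ c ≤ 2 * m ∧ c * (1 - η) < m := by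
  obtain ⟨c, hc, hmc, hlt⟩ := hS.exists_between
    (show m < m * (1 + min 1 η) from lt_mul_of_one_lt_right hm (by simpa using hη))
  have hc_lt_two : c < m * (1 + 1) := hlt.trans_le (by gcongr; exact min_le_left _ _)
  have hc_lt : c < m * (1 + η) := hlt.trans_le (by gcongr; exact min_le_right _ _)
  refine ⟨c, hc, hm.trans_le hmc, by linarith, ?_⟩
  rcases le_or_gt 1 η with hη1 | hη1
  · exact (mul_nonpos_of_nonneg_of_nonpos (hm.le.trans hmc) (by linarith)).trans_lt hm
  · calc c * (1 - η) < m * (1 + η) * (1 - η) := by gcongr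
      _ = m - m * η ^ 2 := by ring
      _ ≤ m := sub_le_self _ (by positivity)

section Lifting

variable {α V : Type*} [NormedAddCommGroup V] [NormedSpace ℝ V] {d : α → α → ℝ} {f : α → V}

theorem exists_lift_of_hasForkBound_of_hasFlatForks {τ κ t ε r s : ℝ}
    (htri : ∀ a b c, d a c ≤ d a b + d b c) (hd : HasForkBound d τ κ) (hV : HasFlatForks V t ε)
    (ht : 0 ≤ t) (hε : 0 ≤ ε) (hr : 0 < r) (hs : 0 < s)
    (hlift : ∀ a y, dist (f a) y ≤ s * (1 + ε) → ∃ b, f b = y ∧ d a b ≤ r)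
    (hsep : ∀ a b, s * t ≤ dist (f a) (f b) → τ * r ≤ d a b)
    {z : α} {y : V} (hzy : dist (f z) y = 3 * s) : ∃ k, f k = y ∧ d z k ≤ r * (3 - κ) := by
  obtain ⟨u, hu, rfl⟩ : ∃ u : V, ‖u‖ = 1 ∧ f z + (3 * s) • u = y := by
    refine ⟨(3 * s)⁻¹ • (y - f z), ?_, ?_⟩
    · rw [norm_smul, ← dist_eq_norm, dist_comm, hzy, Real.norm_of_nonneg (by positivity),
        inv_mul_cancel₀ (by positivity)]
    · rw [smul_inv_smul₀ (by positivity), add_sub_cancel]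
  obtain ⟨e, he_sep, he⟩ := hV u hu
  have hstep : ∀ a v, ‖v‖ ≤ 1 + ε → ∃ b, f b = f a + s • v ∧ d a b ≤ r := fun a v hv =>
    hlift a _ (by rw [dist_self_add_right, norm_smul, Real.norm_of_nonneg hs.le]; gcongr)
  obtain ⟨a, ha, hza⟩ := hstep z u (by linarith)
  choose b hb hab using fun i => hstep a (u + t • e i) (he i).1
  have hb_sep : Pairwise fun i j => τ * r ≤ d (b i) (b j) := by
    intro i j hij
    have hdiff : f (b i) - f (b j) = (s * t) • (e i - e j) := by rw [hb, hb]; module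
    refine hsep _ _ ?_
    rw [dist_eq_norm, hdiff, norm_smul, Real.norm_of_nonneg (by positivity)]
    exact le_mul_of_one_le_right (by positivity) (he_sep hij)
  obtain ⟨i, hzb⟩ := hd hr z a b hza hab hb_sep
  obtain ⟨k, hk, hbk⟩ := hstep (b i) (u - t • e i) (he i).2
  exact ⟨k, by rw [hk, hb, ha]; module, by linarith [htri z (b i) k]⟩

theorem CoarseColipschitzWith.mul_one_sub {τ η t ε L c : ℝ}
    (hco : CoarseColipschitzWith c d dist f) (hLip : CoarseLipschitzWith L d dist f)
    (htri : ∀ a b c, d a c ≤ d a b + d b c) (hd : HasForkBound d τ (6 * η))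
    (hV : HasFlatForks V t ε) (hL : 0 < L) (hc : 0 < c) (ht : 0 < t) (hε : 0 < ε)
    (hεη : 2 * ε ≤ η) (hτ : 2 * L * c * (1 + 2 * ε) * τ ≤ t) :
    CoarseColipschitzWith (c * (1 - η)) d dist f := by
  obtain ⟨R₁, hlift⟩ := hco.exists_forall_lift hc hε
  obtain ⟨R₂, hsep⟩ := hLip.exists_forall_half_le ht
  refine hco.of_forall_le_dist (R := 3 * max 1 (max R₁ R₂)) (fun _ _ => dist_nonneg) hc.le
    fun z y hzy => ?_
  obtain ⟨s, hs⟩ : ∃ s, dist (f z) y = 3 * s := ⟨dist (f z) y / 3, by ring⟩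
  obtain ⟨hs₁, hsR₁, hsR₂⟩ : 1 ≤ s ∧ R₁ ≤ s ∧ R₂ ≤ s := by
    simpa only [max_le_iff] using (show max 1 (max R₁ R₂) ≤ s by linarith)
  have hs0 : 0 < s := by linarith
  have hsep' : ∀ a b, s * t ≤ dist (f a) (f b) → τ * (c * s * (1 + 2 * ε)) ≤ d a b := by
    intro a b hab
    refine le_of_mul_le_mul_left ?_ hL
    calc L * (τ * (c * s * (1 + 2 * ε))) = s * (2 * L * c * (1 + 2 * ε) * τ) / 2 := by ring
      _ ≤ s * t / 2 := by gcongr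
      _ ≤ L * d a b := hsep s hsR₂ a b hab
  obtain ⟨k, hk, hzk⟩ := exists_lift_of_hasForkBound_of_hasFlatForks htri hd hV ht.le hε.le
    (by positivity) hs0 (hlift s hsR₁) hsep' hs
  refine ⟨k, hk, ?_⟩
  have hgain : (1 + 2 * ε) * (3 - 6 * η) ≤ (1 - η) * 3 := by
    have : 0 ≤ ε * η := mul_nonneg hε.le (by linarith)
    linarith
  calc d z k ≤ c * s * (1 + 2 * ε) * (3 - 6 * η) := hzk
    _ = c * s * ((1 + 2 * ε) * (3 - 6 * η)) := by ring
    _ ≤ c * s * ((1 - η) * 3) := by gcongr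
    _ = c * (1 - η) * dist (f z) y := by rw [hs]; ring

theorem exists_forall_coarseColipschitzWith_mul_one_sub {p q γ C L c₀ : ℝ} (hγ : 0 < γ)
    (hC : 0 < C) (hq : 0 ≤ q) (hpq : p < q) (hL : 0 < L) (hc₀ : 0 < c₀)
    (htri : ∀ a b c, d a c ≤ d a b + d b c) (hd : ∀ τ, 0 < τ → HasForkBound d τ (γ * τ ^ p))
    (hV : ∀ t, 0 < t → t ≤ 1 → HasFlatForks V t (C * t ^ q))
    (hLip : CoarseLipschitzWith L d dist f) :
    ∃ η, 0 < η ∧ ∀ c, 0 < c → c ≤ c₀ → CoarseColipschitzWith c d dist f →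
      CoarseColipschitzWith (c * (1 - η)) d dist f := by
  set D := 2 * L * c₀ * (1 + 2 * C) with hD
  have hDpos : 0 < D := by positivity
  obtain ⟨t, ht0, ht1, htA⟩ := exists_rpow_le_mul_rpow hpq
    (show 0 < γ / (12 * C * D ^ p) by positivity)
  have htq : t ^ q ≤ 1 := Real.rpow_le_one ht0.le ht1 hq
  refine ⟨γ * (t / D) ^ p / 6, by positivity, fun c hc hcc₀ hco => ?_⟩
  have hfork : HasForkBound d (t / D) (6 * (γ * (t / D) ^ p / 6)) := by
    rw [mul_div_cancel₀ _ (by norm_num)]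
    exact hd _ (by positivity)
  refine hco.mul_one_sub hLip htri hfork (hV t ht0 ht1) hL hc ht0 (by positivity) ?_ ?_
  · calc 2 * (C * t ^ q) ≤ 2 * (C * (γ / (12 * C * D ^ p) * t ^ p)) := by gcongr
      _ = γ * (t / D) ^ p / 6 := by
        rw [Real.div_rpow ht0.le hDpos.le]
        field_simp
        norm_num
  · calc 2 * L * c * (1 + 2 * (C * t ^ q)) * (t / D) ≤ D * (t / D) := by
          rw [hD]
          gcongr
          exact mul_le_of_le_one_right hC.le htq
      _ = t := mul_div_cancel₀ _ hDpos.ne'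

theorem not_isCoarseLipschitzQuotient_of_hasForkBound_of_hasFlatForks [Nontrivial V]
    {p q γ C : ℝ} (hγ : 0 < γ) (hC : 0 < C) (hq : 0 ≤ q) (hpq : p < q)
    (htri : ∀ a b c, d a c ≤ d a b + d b c) (hd : ∀ τ, 0 < τ → HasForkBound d τ (γ * τ ^ p))
    (hV : ∀ t, 0 < t → t ≤ 1 → HasFlatForks V t (C * t ^ q)) :
    ¬ IsCoarseLipschitzQuotient d dist f := by
  rintro ⟨hsurj, ⟨L, hL0, hLip⟩, c₁, hc₁, hco₁⟩
  have : Nonempty α := hsurj.nonempty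
  set S : Set ℝ := {c | CoarseColipschitzWith c d dist f}
  have hlow : ∀ c ∈ S, 1 ≤ L * c := fun c =>
    one_le_mul_of_coarseLipschitzWith_of_coarseColipschitzWith hL0 hLip
  have hL : 0 < L := pos_of_mul_pos_left (zero_lt_one.trans_le (hlow c₁ hco₁)) hc₁
  have hLinv : L⁻¹ ∈ lowerBounds S := fun c hc => (inv_le_iff_one_le_mul₀' hL).2 (hlow c hc)
  obtain ⟨m, hm⟩ := Real.exists_isGLB ⟨c₁, hco₁⟩ ⟨_, hLinv⟩
  have hm0 : 0 < m := (inv_pos.2 hL).trans_le (hm.2 hLinv)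
  obtain ⟨η, hη, himprove⟩ := exists_forall_coarseColipschitzWith_mul_one_sub hγ hC hq hpq hL
    (mul_pos two_pos hm0) htri hd hV hLip
  obtain ⟨c, hcS, hc0, hc2, hlt⟩ := exists_mem_mul_one_sub_lt_of_isGLB hm hm0 hη
  exact hlt.not_ge (hm.1 (himprove c hc0 hc2 hcS))

end Lifting

theorem beta_p_uniform_subquotient_general {p q γ : ℝ} (hγ : 0 < γ) (hq : 1 ≤ q) (hpq : p < q)
    {X : Type*} [SeminormedAddCommGroup X] [NormedSpace ℝ X] (hX : AdmitsBetaPNorm X p γ)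
    {Y : Type*} [SeminormedAddCommGroup Y] [NormedSpace ℝ Y]
    (hY : ∃ (Z : Set X) (f : Z → Y),
      UniformQuotientMap (fun a b : Z => dist a.1 b.1) (fun a b : Y => dist a b) f ∧
      LipLargeDist (fun a b : Z => dist a.1 b.1) (fun a b : Y => dist a b) f) :
    ¬ ∃ (W : Set Y) (g : W → lp (fun _ : ℕ => ℝ) (ENNReal.ofReal q)),
      UniformQuotientMap (fun a b : W => dist a.1 b.1)
        (fun a b : lp (fun _ : ℕ => ℝ) (ENNReal.ofReal q) => ‖a - b‖) g ∧
      LipLargeDist (fun a b : W => dist a.1 b.1)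
        (fun a b : lp (fun _ : ℕ => ℝ) (ENNReal.ofReal q) => ‖a - b‖) g := by
  rintro ⟨W, g, hg, hgL⟩
  obtain ⟨Z, f, hf, hfL⟩ := hY
  have : Fact (1 ≤ ENNReal.ofReal q) := ⟨ENNReal.one_le_ofReal.2 hq⟩
  have := nontrivial_lp (p := ENNReal.ofReal q)
  have hq0 : 0 ≤ q := zero_le_one.trans hq
  simp only [← dist_eq_norm] at hg hgL
  obtain ⟨N, hrenorm, hfork⟩ := hX.exists_seminorm_hasForkBound hγ
  have hquot := (hg.isCoarseLipschitzQuotient hgL).comp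
    (((hf.isCoarseLipschitzQuotient hfL).comp (hrenorm Z)).restrictPreimage W)
  have hflat : ∀ t, 0 < t → t ≤ 1 →
      HasFlatForks (lp (fun _ : ℕ => ℝ) (ENNReal.ofReal q)) t (2 * t ^ q) := fun t ht _ => by
    simpa only [ENNReal.toReal_ofReal hq0] using
      hasFlatForks_lp (p := ENNReal.ofReal q) ENNReal.ofReal_ne_top ht
  exact not_isCoarseLipschitzQuotient_of_hasForkBound_of_hasFlatForks hγ two_pos hq0 hpq
    (fun x y z => le_map_sub_add_map_sub N x.1.1 y.1.1 z.1.1)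
    (fun τ hτ => (hfork τ hτ).comp fun x : f ⁻¹' W => x.1.1) hflat hquot

/-- Theorem 4.11: if `X` admits an equivalent norm with property
(β_p) and a Banach space `Y` is a uniform subquotient of `X` via a map Lipschitz
for large distances, then for `q > p` the space `ℓ_q` is not a uniform subquotient
of `Y` via a map Lipschitz for large distances. -/
theorem beta_p_uniform_subquotient
    (p γ : ℝ) (hp : 1 < p) (hγ : 0 < γ)
    (X : Type*) [NormedAddCommGroup X] [NormedSpace ℝ X] [CompleteSpace X]
    (hX : AdmitsBetaPNorm X p γ)
    (Y : Type*) [NormedAddCommGroup Y] [NormedSpace ℝ Y] [CompleteSpace Y]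
    (hY : ∃ (Z : Set X) (f : Z → Y),
      UniformQuotientMap (fun a b : Z => dist a.1 b.1) (fun a b : Y => dist a b) f ∧
      LipLargeDist (fun a b : Z => dist a.1 b.1) (fun a b : Y => dist a b) f) :
    ∀ q : ℝ, p < q →
      ¬ ∃ (W : Set Y) (g : W → lp (fun _ : ℕ => ℝ) (ENNReal.ofReal q)),
        UniformQuotientMap (fun a b : W => dist a.1 b.1)
          (fun a b : lp (fun _ : ℕ => ℝ) (ENNReal.ofReal q) => ‖a - b‖) g ∧
        LipLargeDist (fun a b : W => dist a.1 b.1)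
          (fun a b : lp (fun _ : ℕ => ℝ) (ENNReal.ofReal q) => ‖a - b‖) g := by
  exact fun q hpq => beta_p_uniform_subquotient_general hγ (hp.trans hpq).le hpq hX hY

end
end

section
/- Let X and Y be metric spaces, let f : X → Y be a surjective coarse quotient map with constant K ≥ 0, assume Y is metrically convex, and let S ⊆ Y. Then there exist a subset Z ⊆ X and a map g : Z → S onto S such that: (i) if K = 0, then for every ε > 0 there exists c₁ = c₁(ε) > 0 such that for all x ∈ Z and r ≥ ε, B_S(g(x), r) ⊆ g(B_Z(x, c₁·r)); (ii) if K > 0, then there exists c₂ = c₂(K) > 0 such that for all x ∈ Z and r > 0, B_S(g(x), r) ⊆ (g(B_Z(x, c₂·r)))^{4K}. -/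
open Set Function Filter

open scoped ENNReal

attribute [local instance] Classical.propDecidable

noncomputable section

def CoarseQuotientMap {α β : Type*} (dα : α → α → ℝ) (dβ : β → β → ℝ) (f : α → β)
    (K : ℝ) : Prop :=
  Function.Surjective f ∧
  (∀ t : ℝ, 0 < t → ∃ B : ℝ, ∀ a b : α, dα a b ≤ t → dβ (f a) (f b) ≤ B) ∧
  (∀ ε : ℝ, 0 < ε → ∃ δ : ℝ, 0 < δ ∧ ∀ (x : α) (y : β), dβ (f x) y ≤ ε →
    ∃ a : α, dα x a ≤ δ ∧ dβ (f a) y ≤ K)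

def expMod1 {α β : Type*} (dα : α → α → ℝ) (dβ : β → β → ℝ) (f : α → β) : ℝ :=
  sSup {d : ℝ | ∃ a b : α, dα a b ≤ 1 ∧ d = dβ (f a) (f b)}

/-! Hopping from `f x` towards `y` along a metric segment, and lifting each hop by co-coarse
continuity, makes the lifting radius linear in the distance on any scale `r ≥ η > 0`. A lifted hop
misses its target by at most `K`, so one hops by `η + K` to gain `η`, and the error does not
accumulate. Take `Z` to be the preimage of the `K`-neighborhood of `S`, and let `g` be `f` followed
by a choice of points of `S` at distance at most `K` which fixes `S` pointwise. Replacing `f` by `g`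
costs another `K`, for a total error of `2 * K`. -/

/-- Metric convexity in the sense of Menger: any two points have between them points dividing their
distance in any given ratio. -/
def MetricallyConvex (Y : Type*) [PseudoMetricSpace Y] : Prop :=
  ∀ (y₀ y₁ : Y) (t : ℝ), 0 < t → t < 1 →
    ∃ yt : Y, dist y₀ yt = t * dist y₀ y₁ ∧ dist y₁ yt = (1 - t) * dist y₀ y₁

/-- Co-coarse continuity with constant `K`: the closed `K`-neighborhood of the image of a ball of
radius `δ` about `x` contains the ball of radius `ε` about `f x`, with `δ` depending only on `ε`.
The inclusion is spelled out pointwise, to match the third clause of `CoarseQuotientMap`. -/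
def CoCoarselyContinuous {X Y : Type*} [PseudoMetricSpace X] [PseudoMetricSpace Y]
    (f : X → Y) (K : ℝ) : Prop :=
  ∀ ε : ℝ, 0 < ε → ∃ δ : ℝ, 0 < δ ∧ ∀ (x : X) (y : Y), dist (f x) y ≤ ε →
    ∃ a : X, dist x a ≤ δ ∧ dist (f a) y ≤ K

/-- The closed `K`-neighborhood `S^K` of a set. Unlike in `Metric.cthickening`, the bound `K` has to
be attained by a point of `S`. -/
def closedNhd {Y : Type*} [PseudoMetricSpace Y] (S : Set Y) (K : ℝ) : Set Y :=
  {y | ∃ s ∈ S, dist y s ≤ K}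

section PseudoMetric

variable {X Y : Type*} [PseudoMetricSpace X] [PseudoMetricSpace Y] {f : X → Y} {K : ℝ}

theorem subset_closedNhd (hK : 0 ≤ K) (S : Set Y) : S ⊆ closedNhd S K :=
  fun s hs ↦ ⟨s, hs, (dist_self s).trans_le hK⟩

theorem exists_retraction_closedNhd (S : Set Y) (K : ℝ) :
    ∃ p : closedNhd S K → S,
      (∀ y : closedNhd S K, dist (y : Y) (p y) ≤ K) ∧
        ∀ y : closedNhd S K, (y : Y) ∈ S → (p y : Y) = y := by
  have hpoint (y : closedNhd S K) :
      ∃ s : S, dist (y : Y) s ≤ K ∧ ((y : Y) ∈ S → (s : Y) = y) := by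
    obtain ⟨y, s, hs, hys⟩ := y
    by_cases hy : y ∈ S
    · exact ⟨⟨y, hy⟩, (dist_self y).trans_le (dist_nonneg.trans hys), fun _ ↦ rfl⟩
    · exact ⟨⟨s, hs⟩, hys, fun h ↦ absurd h hy⟩
  choose p hdist hfix using hpoint
  exact ⟨p, hdist, hfix⟩

theorem MetricallyConvex.exists_dist_le_le (hY : MetricallyConvex Y) {x z : Y} {δ ε : ℝ}
    (hδ : 0 ≤ δ) (hε : 0 ≤ ε) (h : dist x z ≤ ε + δ) :
    ∃ y, dist x y ≤ δ ∧ dist y z ≤ ε := by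
  obtain hxz | hxz := le_or_gt (dist x z) δ
  · exact ⟨z, hxz, (dist_self z).trans_le hε⟩
  obtain rfl | hδ := hδ.eq_or_lt
  · exact ⟨x, (dist_self x).le, by simpa only [add_zero] using h⟩
  have hpos : 0 < dist x z := hδ.trans hxz
  obtain ⟨y, hxy, hzy⟩ := hY x z (δ / dist x z) (div_pos hδ hpos) ((div_lt_one hpos).2 hxz)
  rw [div_mul_cancel₀ _ hpos.ne'] at hxy
  rw [sub_mul, one_mul, div_mul_cancel₀ _ hpos.ne', dist_comm] at hzy
  exact ⟨y, hxy.le, by linarith⟩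

theorem MetricallyConvex.exists_lift_nat_mul (hY : MetricallyConvex Y) (hK : 0 ≤ K) {η δ : ℝ}
    (hη : 0 ≤ η)
    (hlift : ∀ x y, dist (f x) y ≤ η + K → ∃ a, dist x a ≤ δ ∧ dist (f a) y ≤ K)
    (n : ℕ) (x : X) (y : Y) (hxy : dist (f x) y ≤ n * η + K) :
    ∃ z, dist x z ≤ n * δ ∧ dist (f z) y ≤ K := by
  induction n generalizing x with
  | zero => exact ⟨x, by simp, by simpa using hxy⟩
  | succ n ih =>
    push_cast at hxy ⊢
    obtain ⟨w, hxw, hwy⟩ := hY.exists_dist_le_le (x := f x) (z := y) (δ := η + K) (ε := n * η)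
      (by positivity) (by positivity) (by linarith)
    obtain ⟨a, hxa, haw⟩ := hlift x w hxw
    obtain ⟨z, haz, hzy⟩ := ih a (by linarith [dist_triangle (f a) w y])
    exact ⟨z, by linarith [dist_triangle x a z], hzy⟩

theorem CoCoarselyContinuous.exists_lift_mul (hf : CoCoarselyContinuous f K)
    (hY : MetricallyConvex Y) (hK : 0 ≤ K) {η : ℝ} (hη : 0 < η) :
    ∃ c : ℝ, 0 < c ∧ ∀ (x : X) (y : Y) (r : ℝ), η ≤ r → dist (f x) y ≤ r + K →
      ∃ z, dist x z ≤ c * r ∧ dist (f z) y ≤ K := by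
  obtain ⟨δ, hδ, hlift⟩ := hf (η + K) (by positivity)
  refine ⟨2 * δ / η, by positivity, fun x y r hr hxy ↦ ?_⟩
  have hr_le : r ≤ ⌈r / η⌉₊ * η := (div_le_iff₀ hη).1 (Nat.le_ceil _)
  have hceil : (⌈r / η⌉₊ : ℝ) ≤ 2 * (r / η) :=
    Nat.ceil_le_two_mul (by linarith [(one_le_div hη).2 hr])
  obtain ⟨z, hxz, hzy⟩ := hY.exists_lift_nat_mul hK hη.le hlift ⌈r / η⌉₊ x y (by linarith)
  refine ⟨z, ?_, hzy⟩
  calc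
    dist x z ≤ ⌈r / η⌉₊ * δ := hxz
    _ ≤ 2 * (r / η) * δ := by gcongr
    _ = 2 * δ / η * r := by ring

theorem CoCoarselyContinuous.exists_lift_preimage_closedNhd (hf : CoCoarselyContinuous f K)
    (hY : MetricallyConvex Y) (hK : 0 ≤ K) {S : Set Y} {g : f ⁻¹' closedNhd S K → S}
    (hg : ∀ x : f ⁻¹' closedNhd S K, dist (f x) (g x) ≤ K) {η : ℝ} (hη : 0 < η) :
    ∃ c : ℝ, 0 < c ∧ ∀ (x : f ⁻¹' closedNhd S K) (r : ℝ), η ≤ r → ∀ y : S,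
      dist (g x : Y) y ≤ r →
        ∃ z : f ⁻¹' closedNhd S K, dist (x : X) z ≤ c * r ∧ dist (f z) y ≤ K := by
  obtain ⟨c, hc, hlift⟩ := hf.exists_lift_mul hY hK hη
  refine ⟨c, hc, fun x r hr y hxy ↦ ?_⟩
  obtain ⟨z, hxz, hzy⟩ :=
    hlift x y r hr (by linarith [dist_triangle (f x) (g x) y, hg x])
  exact ⟨⟨z, y, y.2, hzy⟩, hxz, hzy⟩

end PseudoMetric

theorem coarse_subquotient_lemma_general {X Y : Type*} [PseudoMetricSpace X] [MetricSpace Y]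
    {f : X → Y} {K : ℝ} (hK : 0 ≤ K) (hf : CoCoarselyContinuous f K) (hY : MetricallyConvex Y)
    {S : Set Y} (hS : S ⊆ range f) :
    ∃ (Z : Set X) (g : Z → S), Surjective g ∧
      (K = 0 → ∀ ε : ℝ, 0 < ε → ∃ c₁ : ℝ, 0 < c₁ ∧
        ∀ (x : Z) (r : ℝ), ε ≤ r → ∀ y : S, dist (g x).1 y.1 ≤ r →
          ∃ z : Z, dist x.1 z.1 ≤ c₁ * r ∧ g z = y) ∧
      (0 < K → ∃ c₂ : ℝ, 0 < c₂ ∧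
        ∀ (x : Z) (r : ℝ), 0 < r → ∀ y : S, dist (g x).1 y.1 ≤ r →
          ∃ z : Z, dist x.1 z.1 ≤ c₂ * r ∧ dist (g z).1 y.1 ≤ 2 * K) := by
  obtain ⟨p, hp_dist, hp_fix⟩ := exists_retraction_closedNhd S K
  let g : f ⁻¹' closedNhd S K → S := p ∘ (closedNhd S K).restrictPreimage f
  have hg_dist (z : f ⁻¹' closedNhd S K) : dist (f z) (g z) ≤ K :=
    hp_dist ((closedNhd S K).restrictPreimage f z)
  have hg_eq (z : f ⁻¹' closedNhd S K) (y : S) (hzy : f z = y) : g z = y :=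
    Subtype.ext ((hp_fix _ (show f z ∈ S from hzy ▸ y.2)).trans hzy)
  refine ⟨f ⁻¹' closedNhd S K, g, fun y ↦ ?_, fun hK₀ ε hε ↦ ?_, fun hK_pos ↦ ?_⟩
  · obtain ⟨x, hx⟩ := hS y.2
    have hxZ : f x ∈ closedNhd S K := hx ▸ subset_closedNhd hK S y.2
    exact ⟨⟨x, hxZ⟩, hg_eq _ y hx⟩
  · obtain ⟨c, hc, hlift⟩ := hf.exists_lift_preimage_closedNhd hY hK hg_dist hε
    refine ⟨c, hc, fun x r hr y hxy ↦ ?_⟩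
    obtain ⟨z, hxz, hzy⟩ := hlift x r hr y hxy
    exact ⟨z, hxz, hg_eq z y (dist_le_zero.1 (hK₀ ▸ hzy))⟩
  · obtain ⟨c, hc, hlift⟩ := hf.exists_lift_preimage_closedNhd hY hK hg_dist hK_pos
    refine ⟨c, hc, fun x r hr y hxy ↦ ?_⟩
    obtain hrK | hKr := lt_or_ge r K
    · exact ⟨x, by rw [dist_self]; positivity, by linarith⟩
    · obtain ⟨z, hxz, hzy⟩ := hlift x r hKr y hxy
      exact ⟨z, hxz, by linarith [dist_triangle_left (g z : Y) y (f z), hg_dist z]⟩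

/-- Lemma 4.13: a subset of a coarse quotient is a coarse quotient
of a subset: if `f : X → Y` is a surjective coarse quotient map with constant `K`,
`Y` is metrically convex and `S ⊆ Y`, there are `Z ⊆ X` and `g : Z → S` onto `S`
such that (i) if `K = 0` then for every `ε > 0` there is `c₁ > 0` with
`B_S(g x, r) ⊆ g(B_Z(x, c₁ r))` for `r ≥ ε`, and (ii) if `K > 0` there is
`c₂ > 0` with `B_S(g x, r) ⊆ (g(B_Z(x, c₂ r)))^{4K}` for all `r > 0`. -/
theorem coarse_subquotient_lemma
    {X Y : Type*} [MetricSpace X] [MetricSpace Y] (f : X → Y) (K : ℝ) (hK : 0 ≤ K)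
    (hf : CoarseQuotientMap (fun a b : X => dist a b) (fun a b : Y => dist a b) f K)
    (hconv : ∀ (y₀ y₁ : Y) (t : ℝ), 0 < t → t < 1 →
      ∃ yt : Y, dist y₀ yt = t * dist y₀ y₁ ∧ dist y₁ yt = (1 - t) * dist y₀ y₁)
    (S : Set Y) :
    ∃ (Z : Set X) (g : Z → S), Function.Surjective g ∧
      (K = 0 → ∀ ε : ℝ, 0 < ε → ∃ c₁ : ℝ, 0 < c₁ ∧
        ∀ (x : Z) (r : ℝ), ε ≤ r → ∀ y : S, dist (g x).1 y.1 ≤ r →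
          ∃ z : Z, dist x.1 z.1 ≤ c₁ * r ∧ g z = y) ∧
      (0 < K → ∃ c₂ : ℝ, 0 < c₂ ∧
        ∀ (x : Z) (r : ℝ), 0 < r → ∀ y : S, dist (g x).1 y.1 ≤ r →
          ∃ z : Z, dist x.1 z.1 ≤ c₂ * r ∧ dist (g z).1 y.1 ≤ 4 * K) := by
  obtain ⟨Z, g, hg, h_zero, h_pos⟩ :=
    coarse_subquotient_lemma_general hK hf.2.2 hconv (hf.1.range_eq ▸ subset_univ S)
  exact ⟨Z, g, hg, h_zero, fun hK_pos ↦ (h_pos hK_pos).imp fun c h ↦ ⟨h.1, fun x r hr y hxy ↦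
    (h.2 x r hr y hxy).imp fun z hz ↦ ⟨hz.1, by linarith [hz.2]⟩⟩⟩

end
end
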